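/- arXiv:1009.4662 — 6 statements merged into one kernel-verified Lean document; each statement's English description precedes it below -/
import Mathlib

section
/- Let R be a commutative ring, let N ≥ 1, and let M be an N×N matrix over R such that every row of M sums to zero and every column of M sums to zero. Then all entries of the adjugate matrix of M are equal: adj(M)_{i j} = adj(M)_{1 1} for all 1 ≤ i, j ≤ N; equivalently, all (N−1)×(N−1) cofactors of M coincide. -/
/-!
The entry `adj(M) i j` is the determinant of `M` with row `j` replaced by the basis vector `e_i`.
By linearity in that row, `adj(M) i j - adj(M) i' j` is the determinant of `M` with row `j` replaced
by `e_i - e_i'`. If the rows of `M` sum to zero, so do those of the new matrix, which therefore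
kills the all-ones vector and has determinant zero. Hence `adj(M) i j` does not depend on `i`;
the same fact for the transpose shows that it does not depend on `j`.
-/

/-- Valid over any commutative ring, since `det A • 1 = adj(A) * A * 1 = 0` for the all-ones
vector; the dimension is positive because of the index `i`. -/
theorem det_eq_zero_of_row_sums_zero {R n : Type*} [CommRing R] [Fintype n] [DecidableEq n]
    (A : Matrix n n R) (i : n) (h : ∀ a, ∑ k, A a k = 0) : A.det = 0 := by
  have h1 : A.mulVec (fun _ => 1) = 0 := by
    ext a
    simpa [Matrix.mulVec, dotProduct] using h a
  have h2 : (A.adjugate * A).mulVec (fun _ => 1) = 0 := by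
    rw [← Matrix.mulVec_mulVec, h1, Matrix.mulVec_zero]
  rw [Matrix.adjugate_mul, Matrix.smul_mulVec, Matrix.one_mulVec] at h2
  simpa using congrFun h2 i

theorem adjugate_row_indep {R n : Type*} [CommRing R] [Fintype n] [DecidableEq n]
    (M : Matrix n n R) (h : ∀ a, ∑ k, M a k = 0) (i i' j : n) :
    M.adjugate i j = M.adjugate i' j := by
  have h0 : (M.updateRow j (Pi.single i 1 - Pi.single i' 1)).det = 0 := by
    refine det_eq_zero_of_row_sums_zero _ i fun a => ?_
    by_cases ha : a = j
    · subst ha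
      simp
    · simpa [Matrix.updateRow_ne ha] using h a
  have h1 := Matrix.det_updateRow_add M j (Pi.single i 1 - Pi.single i' 1) (Pi.single i' 1)
  rw [sub_add_cancel, h0, zero_add] at h1
  rw [Matrix.adjugate_apply, Matrix.adjugate_apply, h1]

/-- If every row and every column of an `N × N` matrix `M` over a commutative ring
sums to zero, then all entries of the adjugate of `M` coincide; equivalently,
all `(N-1) × (N-1)` cofactors of `M` are equal. -/
theorem adjugate_entries_all_eq_of_row_col_sums_zero
    {R : Type*} [CommRing R] {N : ℕ} (hN : 1 ≤ N)
    (M : Matrix (Fin N) (Fin N) R)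
    (hrow : ∀ i : Fin N, ∑ k : Fin N, M i k = 0)
    (hcol : ∀ j : Fin N, ∑ k : Fin N, M k j = 0) :
    ∀ i j : Fin N, M.adjugate i j = M.adjugate ⟨0, hN⟩ ⟨0, hN⟩ := by
  intro i j
  have h := adjugate_row_indep M.transpose hcol j ⟨0, hN⟩ ⟨0, hN⟩
  rw [← Matrix.adjugate_transpose] at h
  exact (adjugate_row_indep M hrow i ⟨0, hN⟩ j).trans h
end

section
/- For every N ≥ 1 and every symmetric family of real weights w_{i j} = w_{j i} (1 ≤ i ≠ j ≤ N), every entry of the adjugate of the weighted Laplacian J equals the spanning-tree polynomial: adj(J)_{i j} = τ(w) for all 1 ≤ i, j ≤ N. In particular the minor of J obtained by deleting the first row and the first column equals the sum over all spanning trees of the complete graph on {1,…,N} of the products of the edge weights. -/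
/-!
The proof expands the determinant row by row and recognises each surviving term as a spanning
tree oriented towards a root.

The entry `(i, r)` of the adjugate is the determinant of the Laplacian whose `r`-th row is replaced
by the basis vector `eᵢ`. Since each remaining row has zero entry sum, replacing `eᵢ` by `eᵣ` does not
change this determinant (`det_updateRow_lap`), so only the diagonal entry `(r, r)` matters.

Row `i ≠ r` of the Laplacian is `∑ k, w i k • (eᵢ - eₖ)`. By multilinearity, the determinant is the
sum over all maps `f` fixing `r` of `∏ i ≠ r, w i (f i)` times the determinant of the matrix
`1 - A`, where `A` is the matrix of the partial map `f` restricted to `i ≠ r`. If every vertex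
reaches `r` under iteration of `f`, then `A` is nilpotent and `det (1 - A) = 1`; otherwise the
indicator function of the set of vertices that never reach `r` is a nonzero kernel vector and the
determinant vanishes (`det_one_sub_stepMatrix`).

Finally, the maps `f` all of whose orbits reach `r` are in bijection with the spanning trees: to `f`
corresponds the graph with edges `{i, f i}` for `i ≠ r`, and conversely `f` sends a vertex of a tree
to its neighbour closer to `r`. Counting edges shows that `i ↦ {i, f i}` is injective, so the
weight of `f` is the product over the edges of the tree.
-/


open scoped Classical

/-- The weighted Laplacian of a symmetric family of weights `w` on `{1,…,N}`:
`J i i = ∑_{k ≠ i} w i k` and `J i j = - w i j` for `i ≠ j`. -/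
noncomputable def lap (N : ℕ) (w : Fin N → Fin N → ℝ) : Matrix (Fin N) (Fin N) ℝ :=
  fun i j => if i = j then ∑ k ∈ Finset.univ.filter (fun k => k ≠ i), w i k else - w i j

/-- The spanning-tree polynomial: the sum over all spanning trees `T` of the complete
graph on `{1,…,N}` (i.e. over all trees on the vertex set `Fin N`) of the product of
the weights `w i j` over the edges `{i,j}` of `T`. -/
noncomputable def treePoly (N : ℕ) (w : Fin N → Fin N → ℝ) : ℝ :=
  ∑ T : SimpleGraph (Fin N),
    if T.IsTree then
      ∏ p ∈ Finset.univ.filter (fun p : Fin N × Fin N => p.1 < p.2 ∧ T.Adj p.1 p.2), w p.1 p.2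
    else 0

namespace MatrixTree

open Matrix

variable {N : ℕ}

/-- `f` is the parent map of an in-tree rooted at `r`: the root is fixed and every vertex
reaches it under iteration. -/
def Rooted (r : Fin N) (f : Fin N → Fin N) : Prop :=
  f r = r ∧ ∀ i, ∃ k, f^[k] i = r

/-- The adjacency matrix of the functional digraph of `f`, without the arrow leaving `r`. -/
def stepMatrix (r : Fin N) (f : Fin N → Fin N) : Matrix (Fin N) (Fin N) ℝ :=
  fun i => if i = r then 0 else Pi.single (f i) 1

/-- The simple graph with edges `{i, f i}` for `i ≠ r`. -/
def parentGraph (r : Fin N) (f : Fin N → Fin N) : SimpleGraph (Fin N) :=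
  SimpleGraph.fromRel fun i j => i ≠ r ∧ f i = j

/-! ### Determinants of functional digraphs -/

lemma stepMatrix_mulVec (r : Fin N) (f : Fin N → Fin N) (v : Fin N → ℝ) (i : Fin N) :
    (stepMatrix r f *ᵥ v) i = if i = r then 0 else v (f i) := by
  by_cases h : i = r <;> simp [stepMatrix, mulVec, h]

lemma stepMatrix_pow_mulVec (r : Fin N) (f : Fin N → Fin N) (v : Fin N → ℝ) (k : ℕ) :
    ∀ i, f^[k] i = r → (stepMatrix r f ^ (k + 1) *ᵥ v) i = 0 := by
  induction k with
  | zero =>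
    intro i hi
    have hi : i = r := hi
    simp [stepMatrix_mulVec, hi]
  | succ k ih =>
    intro i hi
    rw [pow_succ', ← mulVec_mulVec, stepMatrix_mulVec]
    split_ifs with h
    · rfl
    · exact ih _ hi

lemma Rooted.exists_uniform {r : Fin N} {f : Fin N → Fin N} (hf : Rooted r f) :
    ∃ K, ∀ i, f^[K] i = r := by
  choose k hk using hf.2
  refine ⟨∑ i, k i, fun i => ?_⟩
  have hle : k i ≤ ∑ i, k i := Finset.single_le_sum (fun _ _ => Nat.zero_le _) (Finset.mem_univ i)
  obtain ⟨m, hm⟩ := Nat.exists_eq_add_of_le' hle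
  rw [hm, Function.iterate_add_apply, hk i, Function.iterate_fixed hf.1]

lemma Rooted.isNilpotent {r : Fin N} {f : Fin N → Fin N} (hf : Rooted r f) :
    IsNilpotent (stepMatrix r f) := by
  obtain ⟨K, hK⟩ := hf.exists_uniform
  refine ⟨K + 1, ?_⟩
  apply Matrix.mulVec_injective
  ext v i
  simp [stepMatrix_pow_mulVec r f v K i (hK i)]

lemma det_one_sub_of_isNilpotent (A : Matrix (Fin N) (Fin N) ℝ) (hA : IsNilpotent A) :
    (1 - A).det = 1 := by
  have h := (Matrix.isNilpotent_charpoly_sub_pow_of_isNilpotent hA).eq_zero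
  have h2 := Matrix.eval_charpoly A 1
  rw [sub_eq_zero.mp h] at h2
  simpa using h2.symm

lemma det_one_sub_stepMatrix (r : Fin N) (f : Fin N → Fin N) (hr : f r = r) :
    (1 - stepMatrix r f).det = if Rooted r f then 1 else 0 := by
  split_ifs with hf
  · exact det_one_sub_of_isNilpotent _ hf.isNilpotent
  · -- The indicator of the vertices that never reach the root lies in the kernel.
    rw [← Matrix.exists_mulVec_eq_zero_iff]
    have hf' : ∃ i, ¬ ∃ k, f^[k] i = r := by
      by_contra! h
      exact hf ⟨hr, h⟩
    obtain ⟨i₀, hi₀⟩ := hf'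
    refine ⟨fun i => if ∃ k, f^[k] i = r then 0 else 1, ?_, ?_⟩
    · intro h
      have := congrFun h i₀
      simp only [if_neg hi₀] at this
      exact one_ne_zero this
    · ext i
      have hiff : (∃ k, f^[k] (f i) = r) ↔ ∃ k, f^[k] i = r := by
        constructor
        · rintro ⟨k, hk⟩
          exact ⟨k + 1, hk⟩
        · rintro ⟨k, hk⟩
          refine ⟨k, ?_⟩
          rw [← Function.iterate_succ_apply, Function.iterate_succ_apply', hk, hr]
      rw [sub_mulVec, one_mulVec, Pi.sub_apply, stepMatrix_mulVec]
      by_cases hi : i = r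
      · have : ∃ k, f^[k] i = r := ⟨0, hi⟩
        simp [hi, if_pos (hi ▸ this)]
      · simp [hi, hiff]

/-! ### Expansion of the determinant -/

lemma lap_row (w : Fin N → Fin N → ℝ) (i : Fin N) :
    lap N w i = ∑ k, w i k • (Pi.single i 1 - Pi.single k 1 : Fin N → ℝ) := by
  ext j
  simp only [lap, Finset.sum_apply, Pi.smul_apply, Pi.sub_apply, smul_eq_mul, mul_sub,
    Finset.sum_sub_distrib, Pi.single_apply]
  by_cases h : i = j
  · subst h
    have := Finset.sum_filter_add_sum_filter_not Finset.univ (fun k => k ≠ i) (fun k => w i k)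
    simp [Finset.filter_eq'] at this ⊢
    linarith
  · simp [h, Ne.symm h]

/-- Changing the basis vector that replaces row `r` does not change the determinant, because the
other rows of the Laplacian are orthogonal to the all-ones vector. -/
lemma det_updateRow_lap (w : Fin N → Fin N → ℝ) (i r : Fin N) :
    ((lap N w).updateRow r (Pi.single i 1)).det = ((lap N w).updateRow r (Pi.single r 1)).det := by
  have hdecomp : (Pi.single i 1 : Fin N → ℝ) =
      (Pi.single i 1 - Pi.single r 1) + Pi.single r 1 := by simp
  rw [hdecomp, det_updateRow_add, add_eq_right, ← Matrix.exists_mulVec_eq_zero_iff]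
  refine ⟨1, fun h => one_ne_zero (congrFun h r), ?_⟩
  ext j
  by_cases hj : j = r
  · subst hj
    simp [mulVec, dotProduct]
  · simp only [mulVec, dotProduct, updateRow_ne hj, lap_row]
    simp [Finset.sum_apply, Finset.sum_comm (s := Finset.univ) (t := Finset.univ),
      ← Finset.mul_sum]

lemma det_expansion (w : Fin N → Fin N → ℝ) (r : Fin N) :
    ((lap N w).updateRow r (Pi.single r 1)).det =
      ∑ f : Fin N → Fin N, if Rooted r f then ∏ i ∈ Finset.univ.erase r, w i (f i) else 0 := by
  -- The root row is written as a sum over the single index `r`, so that all rows are sums.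
  let A : Fin N → Finset (Fin N) := fun i => if i = r then {r} else Finset.univ
  let c : Fin N → Fin N → ℝ := fun i k => if i = r then 1 else w i k
  let g : Fin N → Fin N → Fin N → ℝ := fun i k =>
    if i = r then Pi.single r 1 else Pi.single i 1 - Pi.single k 1
  have hrow : (lap N w).updateRow r (Pi.single r 1) = fun i => ∑ k ∈ A i, c i k • g i k := by
    funext i
    by_cases hi : i = r
    · subst hi
      simp [A, c, g]
    · rw [updateRow_ne hi, lap_row]
      simp [A, c, g, hi]
  have hdet : ((lap N w).updateRow r (Pi.single r 1)).det =
      ∑ f ∈ Fintype.piFinset A, (∏ i, c i (f i)) * Matrix.det (fun i => g i (f i)) := by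
    rw [hrow]
    refine ((detRowAlternating (R := ℝ) (n := Fin N)).toMultilinearMap.map_sum_finset
      (fun i k => c i k • g i k) A).trans (Finset.sum_congr rfl fun f _ => ?_)
    exact (detRowAlternating (R := ℝ) (n := Fin N)).toMultilinearMap.map_smul_univ
      (fun i => c i (f i)) (fun i => g i (f i))
  rw [hdet]
  have hmem : ∀ f, f ∈ Fintype.piFinset A ↔ f r = r := by
    intro f
    rw [Fintype.mem_piFinset]
    refine ⟨fun h => by simpa [A] using h r, fun h i => ?_⟩
    by_cases hi : i = r
    · subst hi; simp [A, h]
    · simp [A, hi]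
  rw [← Finset.sum_subset (Finset.subset_univ (Fintype.piFinset A))]
  · refine Finset.sum_congr rfl fun f hf => ?_
    have hg : (show Matrix (Fin N) (Fin N) ℝ from fun i => g i (f i)) = 1 - stepMatrix r f := by
      funext i
      change g i (f i) = (1 : Matrix _ _ ℝ) i - stepMatrix r f i
      have h1 : (1 : Matrix (Fin N) (Fin N) ℝ) i = Pi.single i 1 := by
        ext j; simp [Matrix.one_apply, Pi.single_apply, eq_comm]
      by_cases hi : i = r
      · subst hi; simp [g, stepMatrix, h1]
      · simp [g, stepMatrix, hi, h1]
    have hc : ∏ i, c i (f i) = ∏ i ∈ Finset.univ.erase r, w i (f i) := by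
      rw [← Finset.mul_prod_erase _ _ (Finset.mem_univ r)]
      simp only [c, if_true, one_mul]
      exact Finset.prod_congr rfl fun i hi => if_neg (Finset.ne_of_mem_erase hi)
    rw [hg, hc, det_one_sub_stepMatrix r f ((hmem f).mp hf)]
    simp
  · intro f _ hf
    rw [if_neg fun h => hf ((hmem f).mpr h.1)]

/-! ### Rooted maps and spanning trees -/

lemma Rooted.ne {r : Fin N} {f : Fin N → Fin N} (hf : Rooted r f) {i : Fin N} (hi : i ≠ r) :
    f i ≠ i := by
  intro h
  obtain ⟨k, hk⟩ := hf.2 i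
  exact hi (by rwa [Function.iterate_fixed h] at hk)

lemma Rooted.adj {r : Fin N} {f : Fin N → Fin N} (hf : Rooted r f) {i : Fin N} (hi : i ≠ r) :
    (parentGraph r f).Adj i (f i) := by
  simp [parentGraph, SimpleGraph.fromRel_adj, hi, (hf.ne hi).symm]

lemma parentGraph_adj {r : Fin N} {f : Fin N → Fin N} {i j : Fin N}
    (h : (parentGraph r f).Adj i j) : (i ≠ r ∧ f i = j) ∨ (j ≠ r ∧ f j = i) :=
  ((SimpleGraph.fromRel_adj _ _ _).mp h).2

lemma Rooted.reachable {r : Fin N} {f : Fin N → Fin N} (hf : Rooted r f) (k : ℕ) :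
    ∀ i, f^[k] i = r → (parentGraph r f).Reachable i r := by
  induction k with
  | zero =>
    intro i hi
    have hi : i = r := hi
    rw [hi]
  | succ k ih =>
    intro i hi
    by_cases h : i = r
    · rw [h]
    · exact (hf.adj h).reachable.trans (ih _ hi)

lemma Rooted.connected {r : Fin N} {f : Fin N → Fin N} (hf : Rooted r f) :
    (parentGraph r f).Connected := by
  have h : ∀ i, (parentGraph r f).Reachable i r := fun i =>
    let ⟨k, hk⟩ := hf.2 i
    hf.reachable k i hk
  have : Nonempty (Fin N) := ⟨r⟩
  exact ⟨fun i j => (h i).trans (h j).symm⟩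

lemma Rooted.edgeFinset_eq {r : Fin N} {f : Fin N → Fin N} (hf : Rooted r f) :
    (parentGraph r f).edgeFinset = (Finset.univ.erase r).image fun i => s(i, f i) := by
  ext e
  induction e with
  | _ i j =>
    simp only [SimpleGraph.mem_edgeFinset, SimpleGraph.mem_edgeSet, Finset.mem_image,
      Finset.mem_erase, Finset.mem_univ, and_true]
    constructor
    · intro h
      rcases parentGraph_adj h with ⟨h1, h2⟩ | ⟨h1, h2⟩
      · exact ⟨i, h1, by rw [h2]⟩
      · exact ⟨j, h1, by rw [h2, Sym2.eq_swap]⟩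
    · rintro ⟨a, ha, hab⟩
      rw [← SimpleGraph.mem_edgeSet, ← hab]
      exact hf.adj ha

/-- The graph is connected, so its `N - 1` candidate edges have to be distinct. -/
lemma Rooted.card_edgeFinset {r : Fin N} {f : Fin N → Fin N} (hf : Rooted r f) :
    (parentGraph r f).edgeFinset.card = (Finset.univ.erase r).card := by
  have h1 := hf.connected.card_vert_le_card_edgeSet_add_one
  rw [Nat.card_eq_fintype_card, Nat.card_eq_fintype_card, ← SimpleGraph.edgeFinset_card,
    Fintype.card_fin] at h1
  have h2 := Finset.card_image_le (s := Finset.univ.erase r) (f := fun i => s(i, f i))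
  rw [← hf.edgeFinset_eq] at h2
  have h3 : (Finset.univ.erase r).card = N - 1 := by simp
  omega

lemma Rooted.isTree {r : Fin N} {f : Fin N → Fin N} (hf : Rooted r f) :
    (parentGraph r f).IsTree := by
  rw [SimpleGraph.isTree_iff_connected_and_card]
  refine ⟨hf.connected, ?_⟩
  rw [Nat.card_eq_fintype_card, Nat.card_eq_fintype_card, ← SimpleGraph.edgeFinset_card,
    hf.card_edgeFinset, Finset.card_erase_add_one (Finset.mem_univ r), Finset.card_univ]

lemma Rooted.injOn {r : Fin N} {f : Fin N → Fin N} (hf : Rooted r f) :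
    Set.InjOn (fun i => s(i, f i)) (Finset.univ.erase r : Finset (Fin N)) := by
  rw [← Finset.card_image_iff, ← hf.edgeFinset_eq, hf.card_edgeFinset]

/-- A rooted map is determined by its graph: by induction on the number of steps to the root, all
edges at a vertex other than the one to its parent come from its children. -/
lemma Rooted.eq_of_parentGraph_eq {r : Fin N} {f g : Fin N → Fin N} (hf : Rooted r f)
    (hg : Rooted r g) (h : parentGraph r f = parentGraph r g) : f = g := by
  have key : ∀ k i, f^[k] i = r → f i = g i := by
    intro k
    induction k with
    | zero =>
      intro i hi
      have hi : i = r := hi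
      rw [hi, hf.1, hg.1]
    | succ k ih =>
      intro i hi
      by_cases hir : i = r
      · rw [hir, hf.1, hg.1]
      have hj : f (f i) = g (f i) := ih (f i) hi
      have hadj := hf.adj hir
      rw [h] at hadj
      rcases parentGraph_adj hadj with ⟨_, h2⟩ | ⟨h1, h2⟩
      · exact h2.symm
      · -- Otherwise `i` and `f i` would be parents of each other.
        have hs : s(i, f i) = s(f i, f (f i)) := by rw [hj, h2, Sym2.eq_swap]
        have := hf.injOn (by simpa using hir) (by simpa using h1) hs
        exact absurd this.symm (hf.ne hir)
  funext i
  obtain ⟨k, hk⟩ := hf.2 i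
  exact key k i hk

/-- Every tree comes from the map sending each vertex to a neighbour closer to the root. -/
lemma exists_rooted {T : SimpleGraph (Fin N)} (hT : T.IsTree) (r : Fin N) :
    ∃ f, Rooted r f ∧ parentGraph r f = T := by
  have hstep : ∀ i, ∃ j, (i = r → j = r) ∧ (i ≠ r → T.Adj i j ∧ T.dist j r < T.dist i r) := by
    intro i
    by_cases hi : i = r
    · exact ⟨r, fun _ => rfl, fun h => absurd hi h⟩
    obtain ⟨p, hp⟩ := hT.connected.exists_walk_length_eq_dist i r
    cases p with
    | nil => exact absurd rfl hi
    | cons h q =>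
      refine ⟨_, fun h => absurd h hi, fun _ => ⟨h, ?_⟩⟩
      have := SimpleGraph.dist_le q
      rw [SimpleGraph.Walk.length_cons] at hp
      omega
  choose f hf1 hf2 using hstep
  have hreach : ∀ n i, T.dist i r = n → ∃ k, f^[k] i = r := by
    intro n
    induction n using Nat.strong_induction_on with
    | _ n ih =>
      intro i hi
      by_cases hir : i = r
      · exact ⟨0, hir⟩
      · obtain ⟨k, hk⟩ := ih _ (hi ▸ (hf2 i hir).2) (f i) rfl
        exact ⟨k + 1, hk⟩
  have hf : Rooted r f := ⟨hf1 r rfl, fun i => hreach _ i rfl⟩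
  refine ⟨f, hf, ?_⟩
  have hle : parentGraph r f ≤ T := by
    intro i j h
    rcases parentGraph_adj h with ⟨h1, h2⟩ | ⟨h1, h2⟩
    · exact h2 ▸ (hf2 i h1).1
    · exact (h2 ▸ (hf2 j h1).1).symm
  -- A tree is a minimal connected graph.
  exact le_antisymm hle
    ((SimpleGraph.isTree_iff_minimal_connected.mp hT).2 hf.connected hle)

lemma prod_edgeFinset (T : SimpleGraph (Fin N)) (W : Sym2 (Fin N) → ℝ) :
    ∏ p ∈ Finset.univ.filter (fun p : Fin N × Fin N => p.1 < p.2 ∧ T.Adj p.1 p.2), W s(p.1, p.2) =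
      ∏ e ∈ T.edgeFinset, W e := by
  refine Finset.prod_bij (fun p _ => s(p.1, p.2)) ?_ ?_ ?_ fun _ _ => rfl
  · intro p hp
    simpa using (Finset.mem_filter.mp hp).2.2
  · rintro ⟨a, b⟩ hp ⟨c, d⟩ hq h
    have h1 := (Finset.mem_filter.mp hp).2.1
    have h2 := (Finset.mem_filter.mp hq).2.1
    rcases Sym2.eq_iff.mp h with ⟨h3, h4⟩ | ⟨h3, h4⟩
    · exact Prod.ext h3 h4
    · dsimp only at *
      subst h3 h4
      exact absurd h1 h2.asymm
  · intro e
    induction e with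
    | _ i j =>
      intro he
      have hadj : T.Adj i j := by simpa using he
      rcases lt_or_gt_of_ne hadj.ne with hij | hij
      · exact ⟨(i, j), by simp [hij, hadj], rfl⟩
      · exact ⟨(j, i), by simp [hij, hadj.symm], Sym2.eq_swap⟩

lemma Rooted.prod_eq {r : Fin N} {f : Fin N → Fin N} (hf : Rooted r f) (w : Fin N → Fin N → ℝ)
    (hsym : ∀ i j, w i j = w j i) :
    ∏ i ∈ Finset.univ.erase r, w i (f i) =
      ∏ p ∈ Finset.univ.filter
        (fun p : Fin N × Fin N => p.1 < p.2 ∧ (parentGraph r f).Adj p.1 p.2), w p.1 p.2 := by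
  have h := prod_edgeFinset (parentGraph r f) (Sym2.lift ⟨w, hsym⟩)
  rw [hf.edgeFinset_eq, Finset.prod_image hf.injOn] at h
  simpa using h.symm

lemma sum_rooted_eq_treePoly (w : Fin N → Fin N → ℝ) (hsym : ∀ i j, w i j = w j i) (r : Fin N) :
    (∑ f : Fin N → Fin N, if Rooted r f then ∏ i ∈ Finset.univ.erase r, w i (f i) else 0) =
      treePoly N w := by
  rw [treePoly, ← Finset.sum_filter, ← Finset.sum_filter]
  refine Finset.sum_bij (fun f _ => parentGraph r f) ?_ ?_ ?_ ?_
  · intro f hf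
    simpa using (Finset.mem_filter.mp hf).2.isTree
  · intro f hf g hg h
    exact (Finset.mem_filter.mp hf).2.eq_of_parentGraph_eq (Finset.mem_filter.mp hg).2 h
  · intro T hT
    obtain ⟨f, hf, h⟩ := exists_rooted (Finset.mem_filter.mp hT).2 r
    exact ⟨f, by simpa using hf, h⟩
  · intro f hf
    exact (Finset.mem_filter.mp hf).2.prod_eq w hsym

end MatrixTree

/-- All entries of the adjugate of the weighted Laplacian equal the spanning-tree
polynomial (weighted matrix-tree theorem); in particular the minor deleting the first
row and column equals the sum over spanning trees of the products of edge weights. -/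
theorem adjugate_lap_eq_treePoly
    (N : ℕ) (hN : 1 ≤ N) (w : Fin N → Fin N → ℝ)
    (hsym : ∀ i j : Fin N, w i j = w j i) :
    ∀ i j : Fin N, (lap N w).adjugate i j = treePoly N w := by
  intro i j
  rw [Matrix.adjugate_apply, MatrixTree.det_updateRow_lap, MatrixTree.det_expansion,
    MatrixTree.sum_rooted_eq_treePoly w hsym]
end

section
/- Let c be a complex number and let λ_1, …, λ_m be pairwise distinct complex numbers. Define f(λ, μ) = (λ − μ + i c)/(λ − μ). Then the sum over all permutations σ of {1,…,m} of the products ∏_{1 ≤ i < j ≤ m} f(λ_{σ(i)}, λ_{σ(j)}) equals m!; that is, Σ_{σ ∈ S_m} ∏_{1 ≤ i < j ≤ m} f(λ_{σ(i)}, λ_{σ(j)}) = m!. -/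
/-!
Write `a` for `i c`. The sum over permutations is computed by induction on `m`, splitting it
according to the value `p = σ 0`. The factors with `i = 0` contribute
`∏_{q ≠ p} (λ_p - λ_q + a) / (λ_p - λ_q)`, which does not depend on how `σ` arranges the
remaining indices, and the other factors form the same sum for the remaining `m - 1` points.
Everything thus reduces to the one-row identity (`sum_prod_shift_div`)
`∑_p ∏_{q ≠ p} (λ_p - λ_q + a) / (λ_p - λ_q) = m`.

For `a ≠ 0` this comes from Lagrange interpolation of
`P(x) = ∏_q (x - λ_q + a) - ∏_q (x - λ_q)` at the nodes `λ_p`. The polynomial has degree less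
than `m`, its coefficient of `x ^ (m - 1)` is `m a`, and `P(λ_p) = a ∏_{q ≠ p} (λ_p - λ_q + a)`.
The interpolation formula for the coefficient of `x ^ (m - 1)` is then `a` times the one-row
identity. For `a = 0` every factor is `1`.
-/

open Polynomial in
/-- The one-row identity: the interpolation formula for the coefficient of degree `#ι - 1` of
`∏ q, (X - v q + a) - ∏ q, (X - v q)`. -/
theorem sum_prod_shift_div {F ι : Type*} [Field F] [Fintype ι] [DecidableEq ι] (a : F)
    (v : ι → F) (hv : Function.Injective v) :
    ∑ p, ∏ q ∈ Finset.univ.erase p, (v p - v q + a) / (v p - v q) = Fintype.card ι := by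
  have hne : ∀ p, ∀ q ∈ Finset.univ.erase p, v p - v q ≠ 0 := fun p q hq =>
    sub_ne_zero.mpr fun h => Finset.ne_of_mem_erase hq (hv h).symm
  rcases eq_or_ne a 0 with rfl | ha
  · have : ∀ p, ∏ q ∈ Finset.univ.erase p, (v p - v q + 0) / (v p - v q) = 1 := fun p =>
      Finset.prod_eq_one fun q hq => by rw [add_zero, div_self (hne p q hq)]
    rw [Finset.sum_congr rfl fun p _ => this p]
    simp
  rcases isEmpty_or_nonempty ι with hι | hι
  · simp
  set P : F[X] := ∏ q, (X - C (v q - a)) - ∏ q, (X - C (v q)) with hP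
  have hdeg : P.degree < (Finset.univ : Finset ι).card := by
    have hd : ∀ w : ι → F, (∏ q, (X - C (w q))).degree = ((Finset.univ : Finset ι).card : WithBot ℕ) := by
      intro w
      rw [degree_prod]
      simp
    rw [← hd fun q => v q - a]
    refine degree_sub_lt_left ((hd _).trans (hd _).symm) ?_ ?_
    · exact (monic_prod_X_sub_C _ _).ne_zero
    · rw [(monic_prod_X_sub_C _ _).leadingCoeff, (monic_prod_X_sub_C _ _).leadingCoeff]
  have hcoeff : P.coeff ((Finset.univ : Finset ι).card - 1) = Fintype.card ι * a := by
    rw [hP, coeff_sub, prod_X_sub_C_coeff_card_pred _ _ Finset.univ_nonempty.card_pos,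
      prod_X_sub_C_coeff_card_pred _ _ Finset.univ_nonempty.card_pos, Finset.sum_sub_distrib]
    simp
  have heval : ∀ p, P.eval (v p) = a * ∏ q ∈ Finset.univ.erase p, (v p - v q + a) := by
    intro p
    have hz : ∏ q, (v p - v q) = 0 := Finset.prod_eq_zero (Finset.mem_univ p) (sub_self _)
    simp only [hP, eval_sub, eval_prod, eval_X, eval_C, hz, sub_zero]
    rw [← Finset.mul_prod_erase _ _ (Finset.mem_univ p)]
    simp [sub_sub_eq_add_sub, sub_add_eq_add_sub]
  have key := Lagrange.coeff_eq_sum hv.injOn hdeg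
  rw [hcoeff] at key
  refine mul_left_cancel₀ ha ?_
  rw [mul_comm a (Fintype.card ι : F), key, Finset.mul_sum]
  refine Finset.sum_congr rfl fun p _ => ?_
  rw [heval, Finset.prod_div_distrib, mul_div_assoc]

/-- The indices `swap 0 p j.succ` run over all indices other than `p`. -/
theorem prod_swap_succ {M : Type*} [CommMonoid M] {n : ℕ} (p : Fin (n + 1))
    (h : Fin (n + 1) → M) :
    ∏ j : Fin n, h (Equiv.swap 0 p j.succ) = ∏ q ∈ Finset.univ.erase p, h q := by
  have h1 : ∏ q ∈ Finset.univ.erase p, h q = ∏ q, if q = p then 1 else h q := by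
    rw [← Finset.mul_prod_erase _ _ (Finset.mem_univ p), if_pos rfl, one_mul]
    exact Finset.prod_congr rfl fun q hq => by rw [if_neg (Finset.ne_of_mem_erase hq)]
  rw [h1, ← Equiv.prod_comp (Equiv.swap 0 p), Fin.prod_univ_succ]
  simp only [Equiv.swap_apply_left, if_true, one_mul]
  refine Finset.prod_congr rfl fun j _ => ?_
  rw [if_neg fun hj => Fin.succ_ne_zero j
    ((Equiv.swap 0 p).injective (hj.trans (Equiv.swap_apply_left 0 p).symm))]

theorem prod_lt_succ {M : Type*} [CommMonoid M] {n : ℕ} (g : Fin (n + 1) → Fin (n + 1) → M) :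
    ∏ p ∈ Finset.univ.filter (fun p : Fin (n + 1) × Fin (n + 1) => p.1 < p.2), g p.1 p.2 =
      (∏ j : Fin n, g 0 j.succ) *
        ∏ p ∈ Finset.univ.filter (fun p : Fin n × Fin n => p.1 < p.2), g p.1.succ p.2.succ := by
  simp [Finset.prod_filter, Fintype.prod_prod_type, Fin.prod_univ_succ]

/-- For pairwise distinct complex numbers `λ_1, …, λ_m` and
`f(λ, μ) = (λ - μ + i c)/(λ - μ)`, the sum over all permutations `σ` of the
products `∏_{i < j} f(λ_{σ(i)}, λ_{σ(j)})` equals `m!`. -/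
theorem sum_perm_prod_f_eq_factorial
    (c : ℂ) (m : ℕ) (lam : Fin m → ℂ) (hdist : Function.Injective lam) :
    ∑ σ : Equiv.Perm (Fin m),
      ∏ p ∈ Finset.univ.filter (fun p : Fin m × Fin m => p.1 < p.2),
        (lam (σ p.1) - lam (σ p.2) + Complex.I * c) / (lam (σ p.1) - lam (σ p.2))
      = (Nat.factorial m : ℂ) := by
  induction m with
  | zero => simp
  | succ n ih =>
    rw [← Equiv.sum_comp Equiv.Perm.decomposeFin.symm, Fintype.sum_prod_type]
    have hrow : ∀ p : Fin (n + 1), ∑ e : Equiv.Perm (Fin n),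
        ∏ x ∈ Finset.univ.filter (fun x : Fin (n + 1) × Fin (n + 1) => x.1 < x.2),
          (lam (Equiv.Perm.decomposeFin.symm (p, e) x.1)
              - lam (Equiv.Perm.decomposeFin.symm (p, e) x.2) + Complex.I * c) /
            (lam (Equiv.Perm.decomposeFin.symm (p, e) x.1)
              - lam (Equiv.Perm.decomposeFin.symm (p, e) x.2)) =
        (∏ q ∈ Finset.univ.erase p, (lam p - lam q + Complex.I * c) / (lam p - lam q)) *
          (Nat.factorial n : ℂ) := by
      intro p
      rw [← ih (fun j => lam (Equiv.swap 0 p j.succ))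
        (hdist.comp ((Equiv.swap 0 p).injective.comp (Fin.succ_injective n))), Finset.mul_sum]
      refine Finset.sum_congr rfl fun e _ => ?_
      rw [prod_lt_succ fun i j => (lam (Equiv.Perm.decomposeFin.symm (p, e) i)
              - lam (Equiv.Perm.decomposeFin.symm (p, e) j) + Complex.I * c) /
            (lam (Equiv.Perm.decomposeFin.symm (p, e) i)
              - lam (Equiv.Perm.decomposeFin.symm (p, e) j))]
      simp only [Equiv.Perm.decomposeFin_symm_apply_zero,
        Equiv.Perm.decomposeFin_symm_apply_succ]
      congr 1
      -- The first row only sees the set of remaining indices, so `e` can be removed from it.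
      rw [Equiv.prod_comp e fun j => (lam p - lam (Equiv.swap 0 p j.succ) + Complex.I * c) /
          (lam p - lam (Equiv.swap 0 p j.succ)),
        prod_swap_succ p fun q => (lam p - lam q + Complex.I * c) / (lam p - lam q)]
    rw [Finset.sum_congr rfl fun p _ => hrow p, ← Finset.sum_mul,
      sum_prod_shift_div _ _ hdist, Fintype.card_fin, Nat.factorial_succ, Nat.cast_mul]
end

section
/- Let c > 0 and let λ be a nonzero real number. Set φ = 2c/(c² + λ²) and, for real x, define I₂(x) = −(2/λ²) · [ (e^{−i x λ} − 1) · (λ + i c)/(λ − i c) + (e^{i x λ} − 1) · (λ − i c)/(λ + i c) ]. Then lim_{x→0} ( 2·x·(x + 2φ) + I₂(x) ) / x² = 2 φ λ² / c. -/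
/-!
Write `a = (λ+ic)/(λ-ic)`, so that `a⁻¹ = (λ-ic)/(λ+ic)`. Expanding both exponentials to second
order in `x`, the linear term of `I₂` is `-(2/λ²)·iλ(a⁻¹ - a)·x = -4φx`, which cancels the `4φx`
coming from `2x(x + 2φ)`. The quadratic coefficient is `2 + (a + a⁻¹)`, which equals
`4λ²/(λ² + c²) = 2φλ²/c`. The only analytic input is the second-order Taylor limit
`tendsto_exp_taylor_two`; everything else is algebra.
-/

open Filter Topology in
theorem tendsto_exp_taylor_two (w : ℂ) :
    Tendsto (fun x : ℝ => (Complex.exp (w * x) - 1 - w * x) / (x : ℂ) ^ 2)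
      (𝓝[≠] 0) (𝓝 (w ^ 2 / 2)) := by
  have hlin : Tendsto (fun x : ℝ => w * (x : ℂ)) (𝓝[≠] 0) (𝓝 0) := by
    have : Continuous (fun x : ℝ => w * (x : ℂ)) := by fun_prop
    simpa using (this.tendsto 0).mono_left nhdsWithin_le_nhds
  have ho := (Complex.exp_sub_sum_range_succ_isLittleO_pow 2).comp_tendsto hlin
  have hO : ((fun z : ℂ => z ^ 2) ∘ fun x : ℝ => w * (x : ℂ)) =O[𝓝[≠] (0 : ℝ)]
      fun x : ℝ => (x : ℂ) ^ 2 := by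
    refine Asymptotics.IsBigO.of_bound (‖w‖ ^ 2) (Eventually.of_forall fun x => ?_)
    simp [mul_pow]
  have ht := (ho.trans_isBigO hO).tendsto_div_nhds_zero.add_const (w ^ 2 / 2)
  rw [zero_add] at ht
  refine ht.congr' ?_
  filter_upwards [self_mem_nhdsWithin] with x hx
  have hx' : (x : ℂ) ≠ 0 := by exact_mod_cast hx
  simp only [Function.comp, Finset.sum_range_succ, Finset.sum_range_zero]
  norm_num [Nat.factorial]
  field_simp
  ring

open Complex in
/-- With `φ = 2c/(c² + λ²)` and
`I₂(x) = -(2/λ²)·[(e^{-ixλ} - 1)·(λ+ic)/(λ-ic) + (e^{ixλ} - 1)·(λ-ic)/(λ+ic)]`,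
one has `(2·x·(x + 2φ) + I₂(x))/x² → 2φλ²/c` as `x → 0` along nonzero reals. -/
theorem tendsto_gaudin_plus_irreducible_div_sq
    (c : ℝ) (hc : 0 < c) (lam : ℝ) (hlam : lam ≠ 0) :
    Filter.Tendsto
      (fun x : ℝ =>
        (((2 * x * (x + 2 * (2 * c / (c ^ 2 + lam ^ 2)))) : ℂ) +
          (-(2 / (lam : ℂ) ^ 2) *
            ((Complex.exp (-I * x * lam) - 1) * (((lam : ℂ) + I * c) / ((lam : ℂ) - I * c)) +
              (Complex.exp (I * x * lam) - 1) * (((lam : ℂ) - I * c) / ((lam : ℂ) + I * c))))) /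
          (x : ℂ) ^ 2)
      (nhdsWithin 0 {0}ᶜ)
      (nhds (((2 * (2 * c / (c ^ 2 + lam ^ 2)) * lam ^ 2 / c : ℝ) : ℂ))) := by
  have hp : (lam : ℂ) + I * c ≠ 0 := fun h => hlam (by simpa using congrArg re h)
  have hm : (lam : ℂ) - I * c ≠ 0 := fun h => hlam (by simpa using congrArg re h)
  have hl : (lam : ℂ) ≠ 0 := by exact_mod_cast hlam
  have hc0 : (c : ℂ) ≠ 0 := by exact_mod_cast hc.ne'
  have hfac : (c : ℂ) ^ 2 + (lam : ℂ) ^ 2 = ((lam : ℂ) + I * c) * ((lam : ℂ) - I * c) := by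
    linear_combination (c : ℂ) ^ 2 * I_sq
  have ht := ((((tendsto_exp_taylor_two (-I * lam)).mul_const
      (((lam : ℂ) + I * c) / ((lam : ℂ) - I * c))).add
    ((tendsto_exp_taylor_two (I * lam)).mul_const
      (((lam : ℂ) - I * c) / ((lam : ℂ) + I * c)))).const_mul
    (-(2 / (lam : ℂ) ^ 2))).const_add 2
  -- Vanishing of the coefficient of `x`.
  have hcancel : 4 * (2 * (c : ℂ) / (c ^ 2 + lam ^ 2)) + -(2 / (lam : ℂ) ^ 2) *
      (-I * lam * (((lam : ℂ) + I * c) / ((lam : ℂ) - I * c)) +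
        I * lam * (((lam : ℂ) - I * c) / ((lam : ℂ) + I * c))) = 0 := by
    rw [hfac]
    field_simp
    ring_nf
    simp only [I_sq]
    ring
  convert ht.congr' ?_ using 2
  · push_cast
    have h1 : (-I * (lam : ℂ)) ^ 2 = -(lam : ℂ) ^ 2 := by linear_combination (lam : ℂ) ^ 2 * I_sq
    have h2 : (I * (lam : ℂ)) ^ 2 = -(lam : ℂ) ^ 2 := by linear_combination (lam : ℂ) ^ 2 * I_sq
    rw [hfac, h1, h2]
    have hp' : (lam : ℂ) + c * I ≠ 0 := by rwa [mul_comm (c : ℂ)]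
    have hm' : (lam : ℂ) - c * I ≠ 0 := by rwa [mul_comm (c : ℂ)]
    field_simp
    ring
  · filter_upwards [self_mem_nhdsWithin] with x hx
    have hx' : (x : ℂ) ≠ 0 := by exact_mod_cast hx
    rw [show -I * (x : ℂ) * lam = -I * lam * x by ring,
      show I * (x : ℂ) * lam = I * lam * x by ring, eq_div_iff (pow_ne_zero 2 hx')]
    generalize exp (-I * lam * x) = E at *
    generalize exp (I * lam * x) = F at *
    have h1 : (E - 1 - -I * lam * x) / (x : ℂ) ^ 2 * (x : ℂ) ^ 2 = E - 1 - -I * lam * x :=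
      div_mul_cancel₀ _ (pow_ne_zero 2 hx')
    have h2 : (F - 1 - I * lam * x) / (x : ℂ) ^ 2 * (x : ℂ) ^ 2 = F - 1 - I * lam * x :=
      div_mul_cancel₀ _ (pow_ne_zero 2 hx')
    linear_combination
      (-(2 / (lam : ℂ) ^ 2)) * (((lam : ℂ) + I * c) / ((lam : ℂ) - I * c)) * h1 +
      (-(2 / (lam : ℂ) ^ 2)) * (((lam : ℂ) - I * c) / ((lam : ℂ) + I * c)) * h2 -
      (x : ℂ) * hcancel
end

section
/- Let N ≥ 1 and let w_{i j} = w_{j i} (1 ≤ i ≠ j ≤ N) be a symmetric family of real weights. Then the sum over all directed forests G on the vertex set {1,…,N} of ( ∏_{(j→k) edge of G} w_{j k} ) · H(roots(G)) equals N² · τ(w), where H is the path polynomial of the weights w. -/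
open scoped Classical

/-- Iterate the partial successor map `G` for `n` steps starting from `i`. -/
def stepIter {N : ℕ} (G : Fin N → Option (Fin N)) : ℕ → Fin N → Option (Fin N)
  | 0, i => some i
  | n + 1, i => (stepIter G n i).bind G

/-- A directed forest on `{1,…,N}`: every vertex has at most one outgoing edge
(encoded by `G i = some j` meaning an edge `i → j`) and there is no directed cycle. -/
def IsForest {N : ℕ} (G : Fin N → Option (Fin N)) : Prop :=
  ∀ (i : Fin N) (n : ℕ), 0 < n → stepIter G n i ≠ some i

/-- The roots of the directed graph `G`: the vertices with no outgoing edge. -/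
def roots {N : ℕ} (G : Fin N → Option (Fin N)) : Finset (Fin N) :=
  Finset.univ.filter (fun i => G i = none)

/-- The product of the weights along the consecutive pairs of a list. -/
noncomputable def chainProd {N : ℕ} (w : Fin N → Fin N → ℝ) (l : List (Fin N)) : ℝ :=
  ((l.zip l.tail).map (fun p => w p.1 p.2)).prod

/-- The path polynomial `H(S) = ∑_{(a_1,…,a_m) enumeration of S} ∏_{r=1}^{m-1} w_{a_r a_{r+1}}`
(`H` of a singleton is `1`, the empty product). -/
noncomputable def pathPoly {N : ℕ} (w : Fin N → Fin N → ℝ) (S : Finset (Fin N)) : ℝ :=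
  (S.toList.permutations.map (chainProd w)).sum

/-- The weight of a directed graph `G`: the product of `w j k` over the edges `j → k`. -/
noncomputable def forestWeight {N : ℕ} (w : Fin N → Fin N → ℝ)
    (G : Fin N → Option (Fin N)) : ℝ :=
  ∏ i : Fin N, (G i).elim 1 (w i)

/-!
Both sides count trees with two marked vertices, possibly equal. A directed forest together with
an enumeration `a₁, …, aₘ` of its roots becomes, on adding the edges `a₁ → a₂ → ⋯ → aₘ`, a tree
directed towards `aₘ` with `a₁` as a second marked vertex. Conversely, in a tree directed towards
`v`, deleting the edges of the path that leads from a marked vertex `u` to `v` leaves a forest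
whose roots are the vertices of that path. The product of the edge weights is preserved
(`sum_forests_eq_sum_rootedTrees`), and each of the `N` vertices starts exactly one such path
(`IsForest.card_follows`), so the left-hand side is `N` times the sum of the weights of the rooted
trees.

Finally, a tree on `N` vertices can be directed towards each of its vertices in exactly one way
(`exists_isRootedTree`, `IsRootedTree.ext`), and by symmetry of `w` the directions do not affect
the weight; this gives the second factor `N` (`sum_rootedTrees`). Acyclicity is used throughout
in the form of a rank function that decreases along edges (`isForest_iff_exists_rank`).
-/

/-! ### Forests and rank functions -/

/-- A directed graph with out-degrees at most one is acyclic iff some `ℕ`-valued rank strictly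
decreases along every edge. -/
lemma isForest_iff_exists_rank {N : ℕ} (G : Fin N → Option (Fin N)) :
    IsForest G ↔ ∃ h : Fin N → ℕ, ∀ i j, G i = some j → h j < h i := by
  constructor
  · intro hG
    have key : ∀ i j, Relation.TransGen (fun a b => G a = some b) i j →
        ∃ n, 0 < n ∧ stepIter G n i = some j := by
      intro i j hij
      induction hij with
      | single hab => exact ⟨1, one_pos, by simpa [stepIter] using hab⟩
      | tail _ hbc ih =>
        obtain ⟨n, -, hs⟩ := ih
        exact ⟨n + 1, Nat.succ_pos _, by simp [stepIter, hs, hbc]⟩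
    -- the rank of a vertex is the number of vertices reachable from it in at least one step
    refine ⟨fun i => (Finset.univ.filter
      (fun k => Relation.TransGen (fun a b => G a = some b) i k)).card, fun i j hij => ?_⟩
    apply Finset.card_lt_card
    rw [Finset.ssubset_iff_of_subset]
    · refine ⟨j, Finset.mem_filter.2 ⟨Finset.mem_univ _, .single hij⟩, ?_⟩
      simp only [Finset.mem_filter, Finset.mem_univ, true_and]
      intro hjj
      obtain ⟨n, hn, hs⟩ := key j j hjj
      exact hG j n hn hs
    · intro k
      simp only [Finset.mem_filter, Finset.mem_univ, true_and]
      exact fun hk => Relation.TransGen.head hij hk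
  · rintro ⟨h, hh⟩ i n hn hs
    have key : ∀ n j, stepIter G n i = some j → h j + n ≤ h i := by
      intro n
      induction n with
      | zero => intro j hj; simp [stepIter] at hj; simp [hj]
      | succ n ih =>
        intro j hj
        obtain ⟨k, hk, hkj⟩ := Option.bind_eq_some_iff.1 hj
        have := ih k hk
        have := hh k j hkj
        omega
    have := key n i hs
    omega

lemma IsForest.roots_nonempty {N : ℕ} (hN : 1 ≤ N) {G : Fin N → Option (Fin N)}
    (hG : IsForest G) : (roots G).Nonempty := by
  obtain ⟨h, hh⟩ := (isForest_iff_exists_rank G).1 hG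
  have : Nonempty (Fin N) := ⟨⟨0, hN⟩⟩
  obtain ⟨i, hi⟩ := Finite.exists_min h
  refine ⟨i, ?_⟩
  simp only [roots, Finset.mem_filter, Finset.mem_univ, true_and]
  cases hGi : G i with
  | none => rfl
  | some j => exact absurd (hh i j hGi) (not_lt.2 (hi j))

/-! ### Paths as lists of vertices -/

/-- The entry following the first occurrence of `i` in the list; `none` if there is none. -/
def nextIn {N : ℕ} : List (Fin N) → Fin N → Option (Fin N)
  | [], _ => none
  | a :: l, i => if i = a then l.head? else nextIn l i

lemma nextIn_mem {N : ℕ} {l : List (Fin N)} {i j : Fin N} (h : nextIn l i = some j) :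
    j ∈ l := by
  induction l with
  | nil => simp [nextIn] at h
  | cons a l ih =>
    rw [nextIn] at h
    split_ifs at h
    · exact List.mem_cons_of_mem _ (List.mem_of_mem_head? h)
    · exact List.mem_cons_of_mem _ (ih h)

lemma idxOf_lt_of_nextIn {N : ℕ} {l : List (Fin N)} (hl : l.Nodup) {i j : Fin N}
    (h : nextIn l i = some j) : l.idxOf i < l.idxOf j := by
  induction l with
  | nil => simp [nextIn] at h
  | cons a l ih =>
    rw [List.nodup_cons] at hl
    rw [nextIn] at h
    split_ifs at h with hia
    · have hj : j ∈ l := List.mem_of_mem_head? h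
      have hja : a ≠ j := fun e => hl.1 (e ▸ hj)
      subst hia
      rw [List.idxOf_cons_self, List.idxOf_cons_ne _ hja]
      omega
    · have hj : j ∈ l := nextIn_mem h
      have hja : a ≠ j := fun e => hl.1 (e ▸ hj)
      rw [List.idxOf_cons_ne _ hja, List.idxOf_cons_ne _ (Ne.symm hia)]
      have := ih hl.2 h
      omega

lemma existsUnique_nextIn_eq_none {N : ℕ} {l : List (Fin N)} (hl : l.Nodup) (hne : l ≠ []) :
    ∃! v, v ∈ l ∧ nextIn l v = none := by
  induction l with
  | nil => exact absurd rfl hne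
  | cons a l ih =>
    rw [List.nodup_cons] at hl
    cases l with
    | nil => exact ⟨a, by simp [nextIn], by simp⟩
    | cons b l =>
      obtain ⟨v, ⟨hv, hvn⟩, hu⟩ := ih hl.2 (by simp)
      have hva : v ≠ a := fun e => hl.1 (e ▸ hv)
      refine ⟨v, ⟨List.mem_cons_of_mem _ hv, by rw [nextIn, if_neg hva]; exact hvn⟩, ?_⟩
      rintro y ⟨hy, hyn⟩
      rw [nextIn] at hyn
      split_ifs at hyn with hya
      · simp at hyn
      · exact hu y ⟨(List.mem_cons.1 hy).resolve_left hya, hyn⟩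

/-- The weight of a path is the product of the weights of its edges `i → nextIn l i`. -/
lemma chainProd_eq_prod_nextIn {N : ℕ} (w : Fin N → Fin N → ℝ) {l : List (Fin N)}
    (hl : l.Nodup) : chainProd w l = ∏ i ∈ l.toFinset, (nextIn l i).elim 1 (w i) := by
  induction l with
  | nil => simp [chainProd]
  | cons a l ih =>
    rw [List.nodup_cons] at hl
    have h1 : ∏ i ∈ l.toFinset, (nextIn (a :: l) i).elim 1 (w i)
        = ∏ i ∈ l.toFinset, (nextIn l i).elim 1 (w i) := by
      refine Finset.prod_congr rfl fun i hi => ?_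
      have hia : i ≠ a := fun e => hl.1 (e ▸ List.mem_toFinset.1 hi)
      rw [nextIn, if_neg hia]
    rw [List.toFinset_cons, Finset.prod_insert (by simpa using hl.1), h1, ← ih hl.2]
    cases l with
    | nil => simp [chainProd, nextIn]
    | cons b l => simp [chainProd, nextIn]

/-- `Follows G l`: in `G`, every vertex of `l` points to the next entry of `l`, and the last one
is a root. For `l` without repetitions this says that `l` is the trajectory of its first vertex
under `G`. -/
def Follows {N : ℕ} (G : Fin N → Option (Fin N)) (l : List (Fin N)) : Prop :=
  ∀ i ∈ l, G i = nextIn l i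

/-- Two nonempty trajectories with the same starting point coincide. -/
lemma Follows.unique {N : ℕ} {G : Fin N → Option (Fin N)} {l l' : List (Fin N)}
    (hl : l.Nodup) (hl' : l'.Nodup) (hne : l ≠ []) (h : Follows G l) (h' : Follows G l')
    (hh : l.head? = l'.head?) : l = l' := by
  have tail : ∀ {a : Fin N} {l : List (Fin N)}, (a :: l).Nodup → Follows G (a :: l) →
      Follows G l ∧ G a = l.head? := by
    intro a l hn hf
    rw [List.nodup_cons] at hn
    refine ⟨fun i hi => ?_, ?_⟩
    · have hia : i ≠ a := fun e => hn.1 (e ▸ hi)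
      rw [hf i (List.mem_cons_of_mem _ hi), nextIn, if_neg hia]
    · rw [hf a (by simp), nextIn, if_pos rfl]
  induction l generalizing l' with
  | nil => exact absurd rfl hne
  | cons a l ih =>
    cases l' with
    | nil => simp at hh
    | cons a' l' =>
      obtain rfl : a = a' := by simpa using hh
      obtain ⟨h1, h2⟩ := tail hl h
      obtain ⟨h1', h2'⟩ := tail hl' h'
      have hh' := h2.symm.trans h2'
      cases l with
      | nil =>
        cases l' with
        | nil => rfl
        | cons b' l' => simp at hh'
      | cons b l =>
        rw [ih (List.nodup_cons.1 hl).2 (List.nodup_cons.1 hl').2 (by simp) h1 h1' hh']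

lemma IsForest.exists_follows {N : ℕ} {G : Fin N → Option (Fin N)} (hG : IsForest G)
    (u : Fin N) : ∃ l : List (Fin N), l.Nodup ∧ l.head? = some u ∧ Follows G l := by
  obtain ⟨h, hh⟩ := (isForest_iff_exists_rank G).1 hG
  suffices H : ∀ n u, h u = n → ∃ l : List (Fin N), l.Nodup ∧ l.head? = some u ∧ Follows G l ∧
      ∀ i ∈ l, h i ≤ n by
    obtain ⟨l, h1, h2, h3, -⟩ := H _ u rfl
    exact ⟨l, h1, h2, h3⟩
  intro n
  induction n using Nat.strong_induction_on with
  | _ n ih =>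
    intro u hu
    cases hGu : G u with
    | none => exact ⟨[u], by simp, by simp, by simp [Follows, nextIn, hGu], by simp [hu]⟩
    | some v =>
      have hv := hh u v hGu
      obtain ⟨l, h1, h2, h3, h4⟩ := ih (h v) (hu ▸ hv) v rfl
      have hul : u ∉ l := fun hm => absurd (h4 u hm) (by omega)
      refine ⟨u :: l, List.nodup_cons.2 ⟨hul, h1⟩, by simp, ?_, ?_⟩
      · intro i hi
        rcases List.mem_cons.1 hi with rfl | hi
        · rw [nextIn, if_pos rfl, hGu, h2]
        · have hiu : i ≠ u := fun e => hul (e ▸ hi)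
          rw [nextIn, if_neg hiu, h3 i hi]
      · intro i hi
        rcases List.mem_cons.1 hi with rfl | hi
        · omega
        · have := h4 i hi
          omega

/-- The nonempty lists of vertices without repetitions. -/
noncomputable def pathLists (N : ℕ) : Finset (List (Fin N)) :=
  ((Finset.univ : Finset {l : List (Fin N) // l.Nodup}).image Subtype.val).filter (· ≠ [])

lemma mem_pathLists {N : ℕ} {l : List (Fin N)} : l ∈ pathLists N ↔ l.Nodup ∧ l ≠ [] := by
  simp [pathLists]

/-- A forest has exactly one trajectory from each of its `N` vertices. -/
lemma IsForest.card_follows {N : ℕ} {G : Fin N → Option (Fin N)} (hG : IsForest G) :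
    ((pathLists N).filter (Follows G)).card = N := by
  refine Eq.trans (Eq.symm ?_) (Finset.card_fin N)
  choose p hp1 hp2 hp3 using hG.exists_follows
  refine Finset.card_bij (fun u _ => p u) ?_ ?_ ?_
  · intro u _
    have : p u ≠ [] := by
      intro e
      have := hp2 u
      simp [e] at this
    simp [mem_pathLists, hp1, hp3, this]
  · intro u _ v _ huv
    have := hp2 u
    rw [huv, hp2 v] at this
    exact (Option.some.inj this).symm
  · intro l hl
    simp only [Finset.mem_filter, mem_pathLists] at hl
    obtain ⟨⟨h1, h2⟩, h3⟩ := hl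
    refine ⟨l.head h2, Finset.mem_univ _, ?_⟩
    exact (Follows.unique h1 (hp1 _) h2 h3 (hp3 _)
      (by rw [hp2, List.head?_eq_some_head h2])).symm

/-- The path polynomial as a sum over repetition-free lists. -/
lemma pathPoly_eq_sum {N : ℕ} (w : Fin N → Fin N → ℝ) {S : Finset (Fin N)} (hS : S.Nonempty) :
    pathPoly w S = ∑ l ∈ (pathLists N).filter (fun l => l.toFinset = S), chainProd w l := by
  have hnd : S.toList.permutations.Nodup := List.nodup_permutations _ S.nodup_toList
  rw [pathPoly, ← List.sum_toFinset _ hnd]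
  refine Finset.sum_congr ?_ fun _ _ => rfl
  ext l
  simp only [List.mem_toFinset, List.mem_permutations, Finset.mem_filter, mem_pathLists]
  constructor
  · intro hp
    have hS' : l.toFinset = S := by
      rw [List.toFinset_eq_of_perm _ _ hp, Finset.toList_toFinset]
    refine ⟨⟨hp.nodup_iff.2 S.nodup_toList, ?_⟩, hS'⟩
    rintro rfl
    simp at hS'
    exact hS.ne_empty hS'.symm
  · rintro ⟨⟨h1, -⟩, rfl⟩
    exact (List.perm_ext_iff_of_nodup h1 (Finset.nodup_toList _)).2 (by simp)

/-! ### Grafting a path onto a forest -/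

/-- Replace the outgoing edges of the vertices of `l` by the edges of the path `l`. -/
noncomputable def graft {N : ℕ} (G : Fin N → Option (Fin N)) (l : List (Fin N)) :
    Fin N → Option (Fin N) :=
  fun i => if i ∈ l then nextIn l i else G i

/-- Delete the outgoing edges of the vertices of `l`. -/
noncomputable def strip {N : ℕ} (G : Fin N → Option (Fin N)) (l : List (Fin N)) :
    Fin N → Option (Fin N) :=
  fun i => if i ∈ l then none else G i

/-- A rooted tree, with its edges directed towards the root: a forest with a single root. -/
def IsRootedTree {N : ℕ} (G : Fin N → Option (Fin N)) : Prop :=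
  IsForest G ∧ ∃! v, G v = none

lemma eq_none_iff_of_roots {N : ℕ} {G : Fin N → Option (Fin N)} {l : List (Fin N)}
    (hr : roots G = l.toFinset) (i : Fin N) : G i = none ↔ i ∈ l := by
  have : i ∈ roots G ↔ i ∈ l.toFinset := by rw [hr]
  simpa [roots] using this

lemma isRootedTree_graft {N : ℕ} {G : Fin N → Option (Fin N)} {l : List (Fin N)}
    (hG : IsForest G) (hr : roots G = l.toFinset) (hl : l.Nodup) (hne : l ≠ []) :
    IsRootedTree (graft G l) := by
  constructor
  · obtain ⟨h, hh⟩ := (isForest_iff_exists_rank G).1 hG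
    refine (isForest_iff_exists_rank _).2
      ⟨fun i => if i ∈ l then l.length - l.idxOf i else h i + l.length + 1, fun i j hij => ?_⟩
    simp only [graft] at hij ⊢
    by_cases hi : i ∈ l
    · rw [if_pos hi] at hij
      have h1 := idxOf_lt_of_nextIn hl hij
      have h2 := nextIn_mem hij
      have h3 := List.idxOf_lt_length_iff.2 h2
      rw [if_pos hi, if_pos h2]
      omega
    · rw [if_neg hi] at hij
      rw [if_neg hi]
      have := hh i j hij
      split_ifs <;> omega
  · obtain ⟨v, ⟨hv, hvn⟩, hu⟩ := existsUnique_nextIn_eq_none hl hne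
    refine ⟨v, by simp [graft, hv, hvn], fun y hy => ?_⟩
    simp only [graft] at hy
    split_ifs at hy with hyl
    · exact hu y ⟨hyl, hy⟩
    · exact absurd ((eq_none_iff_of_roots hr y).1 hy) hyl

lemma isForest_strip {N : ℕ} {G : Fin N → Option (Fin N)} (l : List (Fin N))
    (hG : IsForest G) : IsForest (strip G l) := by
  obtain ⟨h, hh⟩ := (isForest_iff_exists_rank G).1 hG
  refine (isForest_iff_exists_rank _).2 ⟨h, fun i j hij => hh i j ?_⟩
  simp only [strip] at hij
  split_ifs at hij
  exact hij

lemma roots_strip {N : ℕ} {G : Fin N → Option (Fin N)} {l : List (Fin N)}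
    (hG : IsRootedTree G) (hf : Follows G l) (hl : l.Nodup) (hne : l ≠ []) :
    roots (strip G l) = l.toFinset := by
  ext i
  simp only [roots, Finset.mem_filter, Finset.mem_univ, true_and, List.mem_toFinset]
  rw [strip]
  constructor
  · intro hi
    by_contra hil
    rw [if_neg hil] at hi
    -- the last vertex of `l` is a root, so it is the only root of `G`
    obtain ⟨v, ⟨hv, hvn⟩, -⟩ := existsUnique_nextIn_eq_none hl hne
    have : i = v := hG.2.unique hi (by rw [hf v hv, hvn])
    exact hil (this ▸ hv)
  · intro hi
    rw [if_pos hi]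

lemma forestWeight_graft {N : ℕ} (w : Fin N → Fin N → ℝ) {G : Fin N → Option (Fin N)}
    {l : List (Fin N)} (hr : roots G = l.toFinset) (hl : l.Nodup) :
    forestWeight w (graft G l) = forestWeight w G * chainProd w l := by
  have h1 : ∏ i ∈ l.toFinset, (nextIn l i).elim 1 (w i)
      = ∏ i : Fin N, if i ∈ l then (nextIn l i).elim 1 (w i) else 1 := by
    rw [← Finset.prod_filter]
    exact Finset.prod_congr (by ext; simp) fun _ _ => rfl
  rw [chainProd_eq_prod_nextIn w hl, h1, forestWeight, forestWeight, ← Finset.prod_mul_distrib]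
  refine Finset.prod_congr rfl fun i _ => ?_
  by_cases hi : i ∈ l
  · simp [graft, hi, (eq_none_iff_of_roots hr i).2 hi]
  · simp [graft, hi]

/-- For a fixed path `l`, grafting is a weight-preserving bijection from the forests whose roots
are the vertices of `l` onto the rooted trees in which `l` is a trajectory. -/
lemma sum_forests_eq_sum_rootedTrees {N : ℕ} (w : Fin N → Fin N → ℝ) {l : List (Fin N)}
    (hl : l.Nodup) (hne : l ≠ []) :
    ∑ G ∈ (Finset.univ : Finset (Fin N → Option (Fin N))).filter
        (fun G => IsForest G ∧ l.toFinset = roots G), forestWeight w G * chainProd w l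
      = ∑ G ∈ (Finset.univ : Finset (Fin N → Option (Fin N))).filter
        (fun G => IsRootedTree G ∧ Follows G l), forestWeight w G := by
  refine Finset.sum_bij' (fun G _ => graft G l) (fun G _ => strip G l) ?_ ?_ ?_ ?_ ?_
  · intro G hG
    simp only [Finset.mem_filter, Finset.mem_univ, true_and] at hG ⊢
    exact ⟨isRootedTree_graft hG.1 hG.2.symm hl hne, fun i hi => by simp [graft, hi]⟩
  · intro G hG
    simp only [Finset.mem_filter, Finset.mem_univ, true_and] at hG ⊢
    exact ⟨isForest_strip l hG.1.1, (roots_strip hG.1 hG.2 hl hne).symm⟩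
  · intro G hG
    simp only [Finset.mem_filter, Finset.mem_univ, true_and] at hG
    funext i
    by_cases hi : i ∈ l
    · simp [strip, hi, (eq_none_iff_of_roots hG.2.symm i).2 hi]
    · simp [strip, graft, hi]
  · intro G hG
    simp only [Finset.mem_filter, Finset.mem_univ, true_and] at hG
    funext i
    by_cases hi : i ∈ l
    · simp [graft, hi, hG.2 i hi]
    · simp [strip, graft, hi]
  · intro G hG
    simp only [Finset.mem_filter, Finset.mem_univ, true_and] at hG
    exact (forestWeight_graft w hG.2.symm hl).symm

/-! ### Rooted trees and spanning trees -/

/-- The undirected graph underlying a directed graph `G` with out-degrees at most one. -/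
def underlying {N : ℕ} (G : Fin N → Option (Fin N)) : SimpleGraph (Fin N) :=
  SimpleGraph.fromRel (fun i j => G i = some j)

lemma IsForest.underlying_adj {N : ℕ} {G : Fin N → Option (Fin N)} (hG : IsForest G)
    {i j : Fin N} : (underlying G).Adj i j ↔ G i = some j ∨ G j = some i := by
  obtain ⟨h, hh⟩ := (isForest_iff_exists_rank G).1 hG
  rw [underlying, SimpleGraph.fromRel_adj]
  refine ⟨fun h => h.2, fun hij => ⟨?_, hij⟩⟩
  rintro rfl
  have : G i = some i := by simpa using hij
  exact lt_irrefl _ (hh i i this)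

lemma IsRootedTree.connected {N : ℕ} {G : Fin N → Option (Fin N)} (hG : IsRootedTree G) :
    (underlying G).Connected := by
  obtain ⟨h, hh⟩ := (isForest_iff_exists_rank G).1 hG.1
  obtain ⟨v, hv, hu⟩ := hG.2
  have key : ∀ n i, h i = n → (underlying G).Reachable i v := by
    intro n
    induction n using Nat.strong_induction_on with
    | _ n ih =>
      intro i hi
      cases hGi : G i with
      | none => rw [hu i hGi]
      | some j =>
        exact (hG.1.underlying_adj.2 (Or.inl hGi)).reachable.trans
          (ih (h j) (hi ▸ hh i j hGi) j rfl)
  have : Nonempty (Fin N) := ⟨v⟩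
  exact ⟨fun a b => (key _ a rfl).trans (key _ b rfl).symm⟩

/-- Each non-root `i` is sent to its outgoing edge; this enumerates the edges of the underlying
graph once each, an edge being written as an increasing pair. -/
lemma IsForest.prod_edges {M : Type*} [CommMonoid M] {N : ℕ} {G : Fin N → Option (Fin N)}
    (hG : IsForest G) (f : Fin N → Fin N → M) (hf : ∀ i j, f i j = f j i) :
    ∏ p ∈ Finset.univ.filter
        (fun p : Fin N × Fin N => p.1 < p.2 ∧ (underlying G).Adj p.1 p.2), f p.1 p.2
      = ∏ i : Fin N, (G i).elim 1 (f i) := by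
  obtain ⟨h, hh⟩ := (isForest_iff_exists_rank G).1 hG
  have h1 : ∏ i : Fin N, (G i).elim 1 (f i)
      = ∏ i ∈ Finset.univ.filter (fun i => G i ≠ none), (G i).elim 1 (f i) := by
    rw [Finset.prod_filter]
    refine Finset.prod_congr rfl fun i _ => ?_
    split_ifs with hi
    · rfl
    · rw [not_not.1 hi]; rfl
  rw [h1]
  -- the inverse map: an edge `{a, b}` comes from whichever endpoint points to the other
  refine Finset.prod_bij (fun p _ => if G p.1 = some p.2 then p.1 else p.2) ?_ ?_ ?_ ?_
  · rintro ⟨a, b⟩ hp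
    simp only [Finset.mem_filter, Finset.mem_univ, true_and, hG.underlying_adj] at hp ⊢
    split_ifs with hab
    · simp [hab]
    · simp [hp.2.resolve_left hab]
  · rintro ⟨a, b⟩ hp ⟨c, d⟩ hq heq
    simp only [Finset.mem_filter, Finset.mem_univ, true_and, hG.underlying_adj] at hp hq heq
    have := hp.1
    have := hq.1
    grind
  · intro i hi
    simp only [Finset.mem_filter, Finset.mem_univ, true_and] at hi
    obtain ⟨j, hj⟩ := Option.ne_none_iff_exists'.1 hi
    have hlt := hh i j hj
    rcases lt_trichotomy i j with hij | rfl | hij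
    · exact ⟨(i, j), by simp [hG.underlying_adj, hij, hj], by simp [hj]⟩
    · exact absurd hlt (lt_irrefl _)
    · refine ⟨(j, i), by simp [hG.underlying_adj, hij, hj], ?_⟩
      have : G j ≠ some i := fun e => absurd (hh j i e) (by omega)
      simp [this]
  · rintro ⟨a, b⟩ hp
    simp only [Finset.mem_filter, Finset.mem_univ, true_and, hG.underlying_adj] at hp ⊢
    split_ifs with hab
    · simp [hab]
    · simp [hp.2.resolve_left hab, hf a b]

lemma IsRootedTree.isTree {N : ℕ} {G : Fin N → Option (Fin N)} (hG : IsRootedTree G) :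
    (underlying G).IsTree := by
  obtain ⟨v, hv, hu⟩ := hG.2
  refine SimpleGraph.isTree_iff_connected_and_card.2 ⟨hG.connected, ?_⟩
  refine le_antisymm ?_ hG.connected.card_vert_le_card_edgeSet_add_one
  -- every edge is the outgoing edge of some vertex other than the root
  let e : {i : Fin N // i ≠ v} → Sym2 (Fin N) := fun i => s(i.1, (G i.1).getD i.1)
  have hsub : (underlying G).edgeSet ⊆ Set.range e := by
    intro x
    induction x using Sym2.ind with
    | _ a b =>
      rw [SimpleGraph.mem_edgeSet, hG.1.underlying_adj]
      rintro (h | h)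
      · exact ⟨⟨a, by rintro rfl; simp [hv] at h⟩, by simp [e, h]⟩
      · exact ⟨⟨b, by rintro rfl; simp [hv] at h⟩, by simp [e, h, Sym2.eq_swap]⟩
  have h1 : Nat.card (underlying G).edgeSet ≤ Nat.card (Set.range e) :=
    Nat.card_mono (Set.toFinite _) hsub
  have h2 : Nat.card (Set.range e) ≤ Nat.card {i : Fin N // i ≠ v} := Finite.card_range_le e
  have h3 : Nat.card {i : Fin N // i ≠ v} = N - 1 := by
    simp [Nat.card_eq_fintype_card, Fintype.card_subtype_compl]
  have h4 := v.pos
  rw [Nat.card_eq_fintype_card (α := Fin N), Fintype.card_fin]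
  omega

/-- A rooted tree is determined by its underlying graph and its root. -/
lemma IsRootedTree.ext {N : ℕ} {G G' : Fin N → Option (Fin N)} (hG : IsRootedTree G)
    (hG' : IsRootedTree G') (hT : underlying G = underlying G') {v : Fin N}
    (hv : G v = none) (hv' : G' v = none) : G = G' := by
  obtain ⟨h, hh⟩ := (isForest_iff_exists_rank G).1 hG.1
  suffices H : ∀ n i, h i = n → G i = G' i from funext fun i => H _ i rfl
  intro n
  induction n using Nat.strong_induction_on with
  | _ n ih =>
    intro i hi
    cases hGi : G i with
    | none => rw [hG.2.unique hGi hv, hv']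
    | some j =>
      have hlt := hh i j hGi
      have hadj : (underlying G').Adj i j := hT ▸ hG.1.underlying_adj.2 (Or.inl hGi)
      rcases hG'.1.underlying_adj.1 hadj with hij | hji
      · exact hij.symm
      ·
        -- the edge cannot be reversed in `G'`: that would give a 2-cycle in `G`
        rw [← ih (h j) (hi ▸ hlt) j rfl] at hji
        have := hh j i hji
        omega

/-- Every tree can be directed towards any of its vertices. -/
lemma exists_isRootedTree {N : ℕ} {T : SimpleGraph (Fin N)} (hT : T.IsTree) (v : Fin N) :
    ∃ G, IsRootedTree G ∧ G v = none ∧ underlying G = T := by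
  have hstep : ∀ i, i ≠ v → ∃ j, T.Adj i j ∧ T.dist j v < T.dist i v := by
    intro i hi
    obtain ⟨p, hp⟩ := hT.1.exists_walk_length_eq_dist i v
    cases p with
    | nil => exact absurd rfl hi
    | cons hadj q =>
      refine ⟨_, hadj, ?_⟩
      rw [← hp, SimpleGraph.Walk.length_cons]
      exact Nat.lt_succ_of_le (SimpleGraph.dist_le q)
  choose s hs1 hs2 using hstep
  let G : Fin N → Option (Fin N) := fun i => if hi : i = v then none else some (s i hi)
  have hGs : ∀ i j, G i = some j → T.Adj i j ∧ T.dist j v < T.dist i v := by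
    intro i j hij
    simp only [G] at hij
    split_ifs at hij with hi
    obtain rfl := Option.some.inj hij
    exact ⟨hs1 i hi, hs2 i hi⟩
  have hGv : G v = none := by simp [G]
  have hG : IsRootedTree G := by
    refine ⟨(isForest_iff_exists_rank G).2 ⟨fun i => T.dist i v, fun i j hij => (hGs i j hij).2⟩,
      v, hGv, fun y hy => ?_⟩
    by_contra hyv
    simp [G, hyv] at hy
  refine ⟨G, hG, hGv, ?_⟩
  have hle : underlying G ≤ T := by
    intro a b hab
    rcases hG.1.underlying_adj.1 hab with h | h
    · exact (hGs a b h).1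
    · exact (hGs b a h).1.symm
  -- a connected subgraph of a tree on the same vertices is the whole tree
  exact le_antisymm hle ((SimpleGraph.isTree_iff_minimal_connected.1 hT).2 hG.connected hle)

lemma sum_rootedTrees {N : ℕ} (w : Fin N → Fin N → ℝ) (hsym : ∀ i j : Fin N, w i j = w j i) :
    ∑ G ∈ (Finset.univ : Finset (Fin N → Option (Fin N))).filter IsRootedTree, forestWeight w G
      = N * treePoly N w := by
  have h1 : (N : ℝ) * treePoly N w
      = ∑ q ∈ (Finset.univ : Finset (SimpleGraph (Fin N))).filter SimpleGraph.IsTree ×ˢ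
          (Finset.univ : Finset (Fin N)),
        ∏ p ∈ Finset.univ.filter (fun p : Fin N × Fin N => p.1 < p.2 ∧ q.1.Adj p.1 p.2),
          w p.1 p.2 := by
    rw [Finset.sum_product, treePoly, ← Finset.sum_filter, Finset.mul_sum]
    simp
  rw [h1]
  refine Finset.sum_bij
    (fun G hG => (underlying G, (Finset.mem_filter.1 hG).2.2.choose)) ?_ ?_ ?_ ?_
  · intro G hG
    simpa using (Finset.mem_filter.1 hG).2.isTree
  · intro G hG G' hG' heq
    obtain ⟨e1, e2⟩ := Prod.mk.inj heq
    have hv := (Finset.mem_filter.1 hG).2.2.choose_spec.1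
    have hv' := (Finset.mem_filter.1 hG').2.2.choose_spec.1
    exact (Finset.mem_filter.1 hG).2.ext (Finset.mem_filter.1 hG').2 e1 hv (by rw [e2]; exact hv')
  · rintro ⟨T, v⟩ hT
    simp only [Finset.mem_product, Finset.mem_filter, Finset.mem_univ, true_and, and_true] at hT
    obtain ⟨G, hG, hGv, rfl⟩ := exists_isRootedTree hT v
    refine ⟨G, by simpa using hG, Prod.ext rfl ?_⟩
    exact hG.2.unique (hG.2.choose_spec.1) hGv
  · intro G hG
    exact ((Finset.mem_filter.1 hG).2.1.prod_edges w hsym).symm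

/-- The sum over all directed forests `G` on `{1,…,N}` of the product of the edge
weights of `G` times the path polynomial of the set of roots of `G` equals
`N² · τ(w)`, the spanning-tree polynomial times `N²`. -/
theorem sum_forests_pathPoly_roots_eq_sq_mul_treePoly
    (N : ℕ) (hN : 1 ≤ N) (w : Fin N → Fin N → ℝ)
    (hsym : ∀ i j : Fin N, w i j = w j i) :
    ∑ G ∈ (Finset.univ : Finset (Fin N → Option (Fin N))).filter IsForest,
      forestWeight w G * pathPoly w (roots G)
      = (N : ℝ) ^ 2 * treePoly N w := by
  calc
    _ = ∑ G ∈ (Finset.univ : Finset (Fin N → Option (Fin N))).filter IsForest,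
          ∑ l ∈ pathLists N,
            if l.toFinset = roots G then forestWeight w G * chainProd w l else 0 := by
        refine Finset.sum_congr rfl fun G hG => ?_
        rw [pathPoly_eq_sum w ((Finset.mem_filter.1 hG).2.roots_nonempty hN), Finset.mul_sum,
          Finset.sum_filter]
    _ = ∑ l ∈ pathLists N,
          ∑ G ∈ (Finset.univ : Finset (Fin N → Option (Fin N))).filter
            (fun G => IsRootedTree G ∧ Follows G l), forestWeight w G := by
        rw [Finset.sum_comm]
        refine Finset.sum_congr rfl fun l hl => ?_
        obtain ⟨h1, h2⟩ := mem_pathLists.1 hl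
        rw [← Finset.sum_filter, Finset.filter_filter, sum_forests_eq_sum_rootedTrees w h1 h2]
    _ = ∑ G ∈ (Finset.univ : Finset (Fin N → Option (Fin N))).filter IsRootedTree,
          ∑ l ∈ (pathLists N).filter (Follows G), forestWeight w G := by
        simp only [← Finset.filter_filter, Finset.sum_filter (p := fun G => Follows G _)]
        rw [Finset.sum_comm]
        simp only [← Finset.sum_filter]
    _ = N * ∑ G ∈ (Finset.univ : Finset (Fin N → Option (Fin N))).filter IsRootedTree,
          forestWeight w G := by
        rw [Finset.mul_sum]
        refine Finset.sum_congr rfl fun G hG => ?_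
        rw [Finset.sum_const, (Finset.mem_filter.1 hG).2.1.card_follows, nsmul_eq_mul]
    _ = _ := by rw [sum_rootedTrees w hsym]; ring
end

section
/- Let N ≥ 1, let w_{i j} = w_{j i} (1 ≤ i ≠ j ≤ N) be a symmetric family of real weights with weighted Laplacian J, and let λ = (λ_1, …, λ_N) be any vector of real numbers. Then lim_{L→0} [ (det(L·I_N + J)/L) · Σ_{i=1}^{N} λ_i² − λᵀ · adj(L·I_N + J) · λ ] = τ(w) · Σ_{1 ≤ i < j ≤ N} (λ_i − λ_j)². -/
/-!
The row sums of `L + J` are all `L`, so `det (L + J) / L` is, for `L ≠ 0`, a row sum of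
`adj (L + J)`. The function in question therefore agrees off `0` with a continuous function, and
the limit is obtained by inserting `adj J`. It remains to see that every entry of `adj J` is
`τ(w)`, which is the weighted matrix-tree theorem: then the limit is
`τ(w) (N ∑ λ_i² - (∑ λ_i)²) = τ(w) ∑_{i<j} (λ_i - λ_j)²`.

Each entry `adj J i j` equals the diagonal entry `adj J j j`, because the difference of two entries
in a column of `adj J` is the determinant of a matrix that kills the all-ones vector.

For a diagonal entry, fix a root `r`. The row `i ≠ r` of `J` is `∑_k w_{i k} (e_i - e_k)`, so
multilinearity of the determinant writes `adj J r r` as a sum over self-maps `f` of the vertex set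
fixing `r`, with weight `∏_{i ≠ r} w_{i, f i}` and coefficient the determinant of the matrix with
rows `e_i - e_{f i}` (and `e_r`). If every vertex is led to `r` by iterating `f`, that matrix is
triangular with respect to the depth, so its determinant is `1`; otherwise the indicator of the
vertices that never reach `r` is in its kernel and the determinant is `0`. Finally, parent maps `f`
rooted at `r` correspond bijectively to spanning trees.
-/

open scoped Classical

/-! ### Parent maps and spanning trees -/

/-- `f` is the parent map of a tree rooted at `r`: it fixes `r`, and some rank function strictly
decreases along `f` away from `r`. On a finite set the latter says that every vertex is led to `r`
by iterating `f`. -/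
def RootedMap {N : ℕ} (r : Fin N) (f : Fin N → Fin N) : Prop :=
  f r = r ∧ ∃ d : Fin N → ℕ, ∀ i, i ≠ r → d (f i) < d i

/-- The graph whose edges join each vertex to its image under `f`, loops being discarded. -/
def mapGraph {N : ℕ} (f : Fin N → Fin N) : SimpleGraph (Fin N) :=
  SimpleGraph.fromRel fun i j => f i = j

/-- Row `i` of the matrix attached to a self-map sending `i` to `k`: it is `e_i - e_k`, except that
the row of the root `r` is `e_r`. -/
def rootedRow {N : ℕ} (r i k : Fin N) : Fin N → ℝ :=
  if i = r then Pi.single r 1 else Pi.single i 1 - Pi.single k 1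

lemma mapGraph_adj {N : ℕ} {f : Fin N → Fin N} {i j : Fin N} :
    (mapGraph f).Adj i j ↔ i ≠ j ∧ (f i = j ∨ f j = i) := by
  simp [mapGraph, SimpleGraph.fromRel_adj]

namespace RootedMap

variable {N : ℕ} {r : Fin N} {f g : Fin N → Fin N}

lemma apply_ne (hf : RootedMap r f) {i : Fin N} (hi : i ≠ r) : f i ≠ i := by
  obtain ⟨-, d, hd⟩ := hf
  intro h
  have := hd i hi
  rw [h] at this
  omega

lemma apply_apply_ne (hf : RootedMap r f) {i : Fin N} (hi : i ≠ r) : f (f i) ≠ i := by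
  obtain ⟨hr, d, hd⟩ := hf
  intro h
  by_cases hfi : f i = r
  · rw [hfi, hr] at h
    exact hi h.symm
  · have h1 := hd i hi
    have h2 := hd (f i) hfi
    rw [h] at h2
    omega

lemma adj_apply (hf : RootedMap r f) {i : Fin N} (hi : i ≠ r) : (mapGraph f).Adj i (f i) :=
  mapGraph_adj.2 ⟨(hf.apply_ne hi).symm, Or.inl rfl⟩

lemma connected (hf : RootedMap r f) : (mapGraph f).Connected := by
  have key : ∀ i, (mapGraph f).Reachable i r := by
    obtain ⟨d, hd⟩ := hf.2
    intro i
    induction h : d i using Nat.strong_induction_on generalizing i with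
    | _ n ih =>
      by_cases hi : i = r
      · rw [hi]
      · exact (hf.adj_apply hi).reachable.trans (ih _ (h ▸ hd i hi) _ rfl)
  exact (SimpleGraph.connected_iff _).2 ⟨fun i j => (key i).trans (key j).symm, ⟨r⟩⟩

lemma isTree (hf : RootedMap r f) : (mapGraph f).IsTree := by
  refine SimpleGraph.isTree_iff_connected_and_card.2 ⟨hf.connected, le_antisymm ?_
    hf.connected.card_vert_le_card_edgeSet_add_one⟩
  -- the edges are exactly the `N - 1` pairs `{i, f i}` with `i ≠ r`
  have hsub : (mapGraph f).edgeSet ⊆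
      ((Finset.univ.erase r).image fun i => s(i, f i) : Finset (Sym2 (Fin N))) := by
    intro e
    induction e using Sym2.ind with
    | _ a b =>
      intro h
      obtain ⟨hab, h⟩ := mapGraph_adj.1 h
      simp only [Finset.coe_image, Set.mem_image, Finset.mem_coe, Finset.mem_erase,
        Finset.mem_univ, and_true]
      rcases h with h | h
      · refine ⟨a, ?_, by rw [h]⟩
        rintro rfl
        exact hab (hf.1.symm.trans h)
      · refine ⟨b, ?_, by rw [h, Sym2.eq_swap]⟩
        rintro rfl
        exact hab (h.symm.trans hf.1)
  have h1 := Set.ncard_le_ncard hsub (Finset.finite_toSet _)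
  rw [Set.ncard_coe_finset] at h1
  have h2 := h1.trans Finset.card_image_le
  rw [Finset.card_erase_of_mem (Finset.mem_univ _), Finset.card_univ, Fintype.card_fin] at h2
  have := r.pos
  rw [Nat.card_coe_set_eq, Nat.card_fin]
  omega

/-- The parent map is determined by the tree: otherwise the two maps would traverse some edge in
opposite directions although they agree closer to the root. -/
lemma eq_of_mapGraph_eq (hf : RootedMap r f) (hg : RootedMap r g)
    (h : mapGraph f = mapGraph g) : f = g := by
  obtain ⟨d, hd⟩ := hf.2
  funext i
  induction hn : d i using Nat.strong_induction_on generalizing i with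
  | _ n ih =>
    by_cases hi : i = r
    · rw [hi, hf.1, hg.1]
    · have h1 := hf.adj_apply hi
      rw [h, mapGraph_adj] at h1
      rcases h1.2 with h2 | h2
      · exact h2.symm
      · rw [← ih _ (hn ▸ hd i hi) _ rfl] at h2
        exact absurd h2 (hf.apply_apply_ne hi)

/-- Every tree comes from a parent map: send a vertex to a neighbour closer to the root. -/
lemma exists_mapGraph_eq (r : Fin N) {T : SimpleGraph (Fin N)} (hT : T.IsTree) :
    ∃ f, RootedMap r f ∧ mapGraph f = T := by
  have hstep : ∀ i, ∃ j, (i = r → j = r) ∧ (i ≠ r → T.Adj i j ∧ T.dist j r < T.dist i r) := by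
    intro i
    by_cases hi : i = r
    · exact ⟨r, fun _ => rfl, fun h => absurd hi h⟩
    · obtain ⟨p, hp⟩ := hT.connected.exists_walk_length_eq_dist i r
      cases p with
      | nil => exact absurd rfl hi
      | cons hadj q =>
        refine ⟨_, fun h => absurd h hi, fun _ => ⟨hadj, ?_⟩⟩
        rw [← hp, SimpleGraph.Walk.length_cons]
        exact Nat.lt_succ_of_le (SimpleGraph.dist_le q)
  choose f hf1 hf2 using hstep
  have hf : RootedMap r f := ⟨hf1 r rfl, fun i => T.dist i r, fun i hi => (hf2 i hi).2⟩
  refine ⟨f, hf, ?_⟩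
  have hle : mapGraph f ≤ T := by
    intro a b hab
    obtain ⟨hne, h⟩ := mapGraph_adj.1 hab
    rcases h with rfl | rfl
    · refine (hf2 a ?_).1
      rintro rfl
      exact hne hf.1.symm
    · refine (hf2 b ?_).1.symm
      rintro rfl
      exact hne hf.1
  -- a tree is a minimal connected graph
  exact le_antisymm hle ((SimpleGraph.isTree_iff_minimal_connected.1 hT).2 hf.connected hle)

/-- The edge weight of the tree, read off from the parent map. -/
lemma prod_edges (hf : RootedMap r f) {w : Fin N → Fin N → ℝ} (hsym : ∀ i j, w i j = w j i) :
    ∏ p ∈ Finset.univ.filter (fun p : Fin N × Fin N => p.1 < p.2 ∧ (mapGraph f).Adj p.1 p.2),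
      w p.1 p.2 = ∏ i ∈ Finset.univ.erase r, w i (f i) := by
  symm
  refine Finset.prod_bij (fun i _ => (min i (f i), max i (f i))) ?_ ?_ ?_ ?_
  · intro i hi
    have hi : i ≠ r := Finset.ne_of_mem_erase hi
    have hadj := hf.adj_apply hi
    rcases lt_or_gt_of_ne (hf.apply_ne hi) with h | h
    · simpa [min_eq_right h.le, max_eq_left h.le, h] using hadj.symm
    · simpa [min_eq_left h.le, max_eq_right h.le, h] using hadj
  · intro i hi j hj h
    have hi : i ≠ r := Finset.ne_of_mem_erase hi
    have hij : (i = j) ∨ (i = f j ∧ f i = j) := by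
      simp only [Prod.mk.injEq] at h
      obtain ⟨h1, h2⟩ := h
      rcases le_total i (f i) with h3 | h3 <;> rcases le_total j (f j) with h4 | h4 <;>
        simp only [h3, h4, min_eq_left, min_eq_right, max_eq_left, max_eq_right] at h1 h2 <;>
        simp_all
    rcases hij with h | ⟨h1, h2⟩
    · exact h
    · rw [← h2] at h1
      exact absurd h1.symm (hf.apply_apply_ne hi)
  · rintro ⟨a, b⟩ hp
    obtain ⟨hlt, hadj⟩ := (Finset.mem_filter.1 hp).2
    obtain ⟨hne, h⟩ := mapGraph_adj.1 hadj
    simp only at hlt hne h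
    rcases h with h | h
    · refine ⟨a, Finset.mem_erase.2 ⟨?_, Finset.mem_univ _⟩, ?_⟩
      · rintro rfl
        exact hne (hf.1.symm.trans h)
      · simp [h, hlt.le]
    · refine ⟨b, Finset.mem_erase.2 ⟨?_, Finset.mem_univ _⟩, ?_⟩
      · rintro rfl
        exact hne (h.symm.trans hf.1)
      · simp [h, hlt.le]
  · intro i _
    rcases le_total i (f i) with h | h
    · simp [h]
    · simp [h, hsym i (f i)]

/-- The matrix of a parent map is unitriangular with respect to the rank. -/
lemma det_rootedRow (hf : RootedMap r f) :
    (Matrix.of fun i => rootedRow r i (f i)).det = 1 := by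
  obtain ⟨hr, d, hd⟩ := hf
  have hoff : ∀ i j, d i ≤ d j → rootedRow r i (f i) j = if i = j then 1 else 0 := by
    intro i j hij
    unfold rootedRow
    by_cases hi : i = r
    · simp [hi, Pi.single_apply, eq_comm]
    · have hj : j ≠ f i := by
        rintro rfl
        have := hd i hi
        omega
      simp [hi, Pi.single_apply, hj, eq_comm]
  have htri : (Matrix.of fun i => rootedRow r i (f i)).BlockTriangular
      (fun i => OrderDual.toDual (d i)) := by
    intro i j hij
    have hij : d i < d j := hij
    rw [Matrix.of_apply, hoff i j hij.le, if_neg]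
    rintro rfl
    omega
  rw [htri.det]
  refine Finset.prod_eq_one fun a _ => ?_
  have : (Matrix.of fun i => rootedRow r i (f i)).toSquareBlock
      (fun i => OrderDual.toDual (d i)) a = 1 := by
    ext ⟨i, hi⟩ ⟨j, hj⟩
    have hij : d i = d j := OrderDual.toDual.injective (hi.trans hj.symm)
    rw [Matrix.toSquareBlock_def, Matrix.of_apply, Matrix.of_apply, hoff i j hij.le,
      Matrix.one_apply]
    simp
  rw [this, Matrix.det_one]

end RootedMap

/-- If some vertices never reach the root, their indicator function is in the kernel. -/
lemma det_rootedRow_eq_zero {N : ℕ} {r : Fin N} {f : Fin N → Fin N} (hr : f r = r)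
    (hf : ¬ RootedMap r f) : (Matrix.of fun i => rootedRow r i (f i)).det = 0 := by
  have hex : ∃ i, ∀ n, f^[n] i ≠ r := by
    by_contra! h
    -- the number of steps to the root is a rank function
    refine hf ⟨hr, fun i => Nat.find (h i), fun i hi => ?_⟩
    obtain ⟨m, hm⟩ : ∃ m, Nat.find (h i) = m + 1 := by
      refine Nat.exists_eq_succ_of_ne_zero fun h0 => hi ?_
      simpa [h0] using Nat.find_spec (h i)
    have hspec := Nat.find_spec (h i)
    rw [hm, Function.iterate_succ_apply] at hspec
    have := Nat.find_min' (h (f i)) hspec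
    change Nat.find (h (f i)) < Nat.find (h i)
    omega
  obtain ⟨a, ha⟩ := hex
  let v : Fin N → ℝ := fun i => if ∀ n, f^[n] i ≠ r then 1 else 0
  have hvr : v r = 0 := if_neg fun h => h 0 rfl
  have hvf : ∀ i, i ≠ r → v (f i) = v i := by
    intro i hi
    refine if_congr ⟨fun h n => ?_, fun h n => h (n + 1)⟩ rfl rfl
    cases n with
    | zero => exact hi
    | succ n => exact h n
  refine Matrix.exists_mulVec_eq_zero_iff.1 ⟨v, fun h => ?_, ?_⟩
  · have h1 : v a = 1 := if_pos ha
    rw [h] at h1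
    exact zero_ne_one h1
  · funext i
    change rootedRow r i (f i) ⬝ᵥ v = 0
    unfold rootedRow
    by_cases hi : i = r
    · rw [if_pos hi, single_dotProduct, hvr, mul_zero]
    · rw [if_neg hi, sub_dotProduct, single_dotProduct, single_dotProduct, hvf i hi, sub_self]

/-- For a fixed root, `f ↦ mapGraph f` is a weight-preserving bijection from parent maps to
spanning trees. -/
lemma treePoly_eq_sum_rootedMap {N : ℕ} (r : Fin N) {w : Fin N → Fin N → ℝ}
    (hsym : ∀ i j, w i j = w j i) :
    treePoly N w =
      ∑ f : Fin N → Fin N, if RootedMap r f then ∏ i ∈ Finset.univ.erase r, w i (f i) else 0 := by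
  unfold treePoly
  rw [← Finset.sum_filter, ← Finset.sum_filter]
  symm
  refine Finset.sum_bij (fun f _ => mapGraph f) ?_ ?_ ?_ ?_
  · intro f hf
    exact Finset.mem_filter.2 ⟨Finset.mem_univ _, (Finset.mem_filter.1 hf).2.isTree⟩
  · intro f hf g hg h
    exact (Finset.mem_filter.1 hf).2.eq_of_mapGraph_eq (Finset.mem_filter.1 hg).2 h
  · intro T hT
    obtain ⟨f, hf, hfT⟩ := RootedMap.exists_mapGraph_eq r (Finset.mem_filter.1 hT).2
    exact ⟨f, Finset.mem_filter.2 ⟨Finset.mem_univ _, hf⟩, hfT⟩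
  · intro f hf
    exact ((Finset.mem_filter.1 hf).2.prod_edges hsym).symm

/-! ### The matrix-tree theorem -/

/-- Row `i` of the Laplacian is `∑_k w_{i k} (e_i - e_k)`. -/
lemma lap_row {N : ℕ} (w : Fin N → Fin N → ℝ) (i : Fin N) :
    lap N w i = ∑ k, w i k • (Pi.single i (1 : ℝ) - Pi.single k 1) := by
  funext j
  rw [Finset.sum_apply]
  unfold lap
  by_cases hij : i = j
  · subst hij
    rw [if_pos rfl, Finset.sum_filter]
    refine Finset.sum_congr rfl fun k _ => ?_
    by_cases hk : k = i
    · simp [hk]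
    · simp [hk, Ne.symm hk]
  · rw [if_neg hij, Finset.sum_eq_single j]
    · simp [Ne.symm hij]
    · intro k _ hk
      simp [Ne.symm hij, Ne.symm hk]
    · simp

/-- The weighted matrix-tree theorem, for principal cofactors. -/
lemma adjugate_lap_diag {N : ℕ} {w : Fin N → Fin N → ℝ} (hsym : ∀ i j, w i j = w j i)
    (r : Fin N) : (lap N w).adjugate r r = treePoly N w := by
  rw [Matrix.adjugate_apply, treePoly_eq_sum_rootedMap r hsym]
  -- the coefficients for the root row select the maps fixing `r`
  let c : Fin N → Fin N → ℝ := fun i k => if i = r then (if k = r then 1 else 0) else w i k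
  have hM : (lap N w).updateRow r (Pi.single r 1) = fun i => ∑ k, c i k • rootedRow r i k := by
    funext i
    by_cases hi : i = r
    · subst hi
      rw [Matrix.updateRow_self, Finset.sum_eq_single i] <;> simp +contextual [c, rootedRow]
    · rw [Matrix.updateRow_ne hi, lap_row]
      simp [c, rootedRow, hi]
  rw [hM]
  change (Matrix.detRowAlternating (R := ℝ) (n := Fin N)).toMultilinearMap _ = _
  rw [MultilinearMap.map_sum]
  refine Finset.sum_congr rfl fun f _ => ?_
  rw [MultilinearMap.map_smul_univ]
  change (∏ i, c i (f i)) * (Matrix.of fun i => rootedRow r i (f i)).det = _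
  have hc : ∏ i, c i (f i) = c r (f r) * ∏ i ∈ Finset.univ.erase r, w i (f i) := by
    rw [← Finset.mul_prod_erase _ _ (Finset.mem_univ r)]
    congr 1
    refine Finset.prod_congr rfl fun i hi => ?_
    exact if_neg (Finset.ne_of_mem_erase hi)
  rw [hc]
  by_cases hf : RootedMap r f
  · simp [hf, hf.det_rootedRow, c, hf.1]
  · rw [if_neg hf]
    by_cases hr : f r = r
    · rw [det_rootedRow_eq_zero hr hf, mul_zero]
    · simp [c, hr]

lemma lap_mulVec_one {N : ℕ} (w : Fin N → Fin N → ℝ) : (lap N w).mulVec 1 = 0 := by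
  funext i
  rw [Matrix.mulVec, lap_row, sum_dotProduct]
  refine Finset.sum_eq_zero fun k _ => ?_
  rw [smul_dotProduct, sub_dotProduct, single_dotProduct, single_dotProduct]
  simp

/-- The two entries differ by the determinant of a matrix whose rows all have sum zero. -/
lemma adjugate_lap_col {N : ℕ} (w : Fin N → Fin N → ℝ) (i k j : Fin N) :
    (lap N w).adjugate i j = (lap N w).adjugate k j := by
  have h0 : ((lap N w).updateRow j (Pi.single i 1 + -Pi.single k 1)).det = 0 := by
    refine Matrix.exists_mulVec_eq_zero_iff.1 ⟨1, fun h => one_ne_zero (congrFun h i), ?_⟩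
    funext a
    by_cases ha : a = j
    · subst ha
      rw [Matrix.mulVec, Matrix.updateRow_self, add_dotProduct, neg_dotProduct,
        single_dotProduct, single_dotProduct]
      simp
    · rw [Matrix.mulVec, Matrix.updateRow_ne ha]
      exact congrFun (lap_mulVec_one w) a
  rw [Matrix.det_updateRow_add, ← neg_one_smul ℝ (Pi.single k 1 : Fin N → ℝ),
    Matrix.det_updateRow_smul] at h0
  rw [Matrix.adjugate_apply, Matrix.adjugate_apply]
  linarith

/-- The weighted matrix-tree theorem: all cofactors of `J` equal the spanning-tree polynomial. -/
lemma adjugate_lap {N : ℕ} {w : Fin N → Fin N → ℝ} (hsym : ∀ i j, w i j = w j i)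
    (i j : Fin N) : (lap N w).adjugate i j = treePoly N w := by
  rw [adjugate_lap_col w i j j, adjugate_lap_diag hsym]

/-! ### The limit -/

/-- This holds because the all-ones vector is an eigenvector of `L + J` with eigenvalue `L`. -/
lemma det_div_eq_sum_adjugate {N : ℕ} (w : Fin N → Fin N → ℝ) {L : ℝ} (hL : L ≠ 0) (i : Fin N) :
    (L • (1 : Matrix (Fin N) (Fin N) ℝ) + lap N w).det / L =
      ∑ j, (L • (1 : Matrix (Fin N) (Fin N) ℝ) + lap N w).adjugate i j := by
  set M := L • (1 : Matrix (Fin N) (Fin N) ℝ) + lap N w with hM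
  have h1 : M.mulVec 1 = L • 1 := by
    rw [hM, Matrix.add_mulVec, lap_mulVec_one, Matrix.smul_mulVec, Matrix.one_mulVec, add_zero]
  have h2 : M.adjugate.mulVec (M.mulVec 1) = M.det • 1 := by
    rw [Matrix.mulVec_mulVec, Matrix.adjugate_mul, Matrix.smul_mulVec, Matrix.one_mulVec]
  rw [h1, Matrix.mulVec_smul] at h2
  have h3 := congrFun h2 i
  simp only [Pi.smul_apply, Matrix.mulVec, dotProduct_one, Pi.one_apply, smul_eq_mul,
    mul_one] at h3
  rw [← h3, mul_div_cancel_left₀ _ hL]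

/-- Lagrange's identity `N ∑ λ_i² - (∑ λ_i)² = ∑_{i<j} (λ_i - λ_j)²`. -/
lemma card_mul_sum_sq_sub_sq_sum {N : ℕ} (lam : Fin N → ℝ) :
    (N : ℝ) * ∑ i, lam i ^ 2 - ∑ i, ∑ j, lam i * lam j =
      ∑ p ∈ Finset.univ.filter (fun p : Fin N × Fin N => p.1 < p.2), (lam p.1 - lam p.2) ^ 2 := by
  have hfull : ∑ p : Fin N × Fin N, (lam p.1 - lam p.2) ^ 2 =
      2 * ((N : ℝ) * ∑ i, lam i ^ 2 - ∑ i, ∑ j, lam i * lam j) := by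
    rw [Fintype.sum_prod_type]
    simp only [sub_sq, Finset.sum_add_distrib, Finset.sum_sub_distrib, Finset.sum_const,
      Finset.card_univ, Fintype.card_fin, nsmul_eq_mul, mul_assoc, ← Finset.mul_sum]
    ring
  have hswap : ∑ p ∈ Finset.univ.filter (fun p : Fin N × Fin N => p.2 < p.1),
        (lam p.1 - lam p.2) ^ 2 =
      ∑ p ∈ Finset.univ.filter (fun p : Fin N × Fin N => p.1 < p.2), (lam p.1 - lam p.2) ^ 2 := by
    refine Finset.sum_bij (fun p _ => p.swap) ?_ ?_ ?_ ?_
    · simp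
    · intro a _ b _ h
      exact Prod.swap_injective h
    · intro b hb
      exact ⟨b.swap, by simpa using hb, by simp⟩
    · intro a _
      simp only [Prod.fst_swap, Prod.snd_swap]
      ring
  have hsplit : ∑ p : Fin N × Fin N, (lam p.1 - lam p.2) ^ 2 =
      ∑ p ∈ Finset.univ.filter (fun p : Fin N × Fin N => p.1 < p.2), (lam p.1 - lam p.2) ^ 2 +
      ∑ p ∈ Finset.univ.filter (fun p : Fin N × Fin N => p.2 < p.1), (lam p.1 - lam p.2) ^ 2 := by
    rw [Finset.sum_filter, Finset.sum_filter, ← Finset.sum_add_distrib]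
    refine Finset.sum_congr rfl fun p _ => ?_
    rcases lt_trichotomy p.1 p.2 with h | h | h
    · simp [h, h.not_gt]
    · simp [h]
    · simp [h, h.not_gt]
  linarith

/-- As `L → 0` along nonzero reals,
`(det (L·I + J)/L) · ∑_i λ_i² − λᵀ · adj(L·I + J) · λ → τ(w) · ∑_{i<j} (λ_i − λ_j)²`. -/
theorem tendsto_det_div_mul_sum_sq_sub_quadratic_adjugate
    (N : ℕ) (hN : 1 ≤ N) (w : Fin N → Fin N → ℝ)
    (hsym : ∀ i j : Fin N, w i j = w j i) (lam : Fin N → ℝ) :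
    Filter.Tendsto
      (fun L : ℝ =>
        ((L • (1 : Matrix (Fin N) (Fin N) ℝ) + lap N w).det / L) * (∑ i : Fin N, lam i ^ 2) -
          ∑ i : Fin N, ∑ j : Fin N,
            lam i * (L • (1 : Matrix (Fin N) (Fin N) ℝ) + lap N w).adjugate i j * lam j)
      (nhdsWithin 0 {0}ᶜ)
      (nhds (treePoly N w *
        ∑ p ∈ Finset.univ.filter (fun p : Fin N × Fin N => p.1 < p.2),
          (lam p.1 - lam p.2) ^ 2)) := by
  let r : Fin N := ⟨0, hN⟩
  let F : ℝ → ℝ := fun L =>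
    (∑ j, (L • (1 : Matrix (Fin N) (Fin N) ℝ) + lap N w).adjugate r j) * (∑ i, lam i ^ 2) -
      ∑ i, ∑ j, lam i * (L • (1 : Matrix (Fin N) (Fin N) ℝ) + lap N w).adjugate i j * lam j
  have hadj : Continuous fun L : ℝ =>
      (L • (1 : Matrix (Fin N) (Fin N) ℝ) + lap N w).adjugate :=
    Continuous.matrix_adjugate (by fun_prop)
  have hcont : Continuous F := by
    have := fun i j => hadj.matrix_elem i j
    fun_prop
  have hF0 : F 0 = treePoly N w *
      ∑ p ∈ Finset.univ.filter (fun p : Fin N × Fin N => p.1 < p.2), (lam p.1 - lam p.2) ^ 2 := by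
    have hquad : ∑ i, ∑ j, lam i * treePoly N w * lam j =
        treePoly N w * ∑ i, ∑ j, lam i * lam j := by
      simp only [Finset.mul_sum]
      refine Finset.sum_congr rfl fun i _ => Finset.sum_congr rfl fun j _ => ?_
      ring
    simp only [F, zero_smul, zero_add, adjugate_lap hsym, Finset.sum_const, Finset.card_univ,
      Fintype.card_fin, nsmul_eq_mul]
    rw [← card_mul_sum_sq_sub_sq_sum, hquad]
    ring
  rw [← hF0]
  refine (hcont.tendsto 0 |>.mono_left nhdsWithin_le_nhds).congr' ?_
  filter_upwards [self_mem_nhdsWithin] with L hL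
  simp only [F]
  rw [det_div_eq_sum_adjugate w hL r]
end
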